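/- arXiv:1803.07705 — 7 statements merged into one kernel-verified Lean document; each statement's English description precedes it below -/
import Mathlib

section
/- Fix a strongly connected directed weighted graph G = (V, E, W) with n nodes and integer travel times (w_{ij} ≥ 1 on edges, 0 otherwise), a stationary distribution π > 0, and ε > 0 such that the ε-conforming set P^ε_{G,π} is nonempty. Then there exist constants c > 0 and λ_max ∈ (0,1) such that for every P ∈ P^ε_{G,π}, every state i, and every k ∈ ℤ_{>0}, the first return probability satisfies F_k(i,i) ≤ c·λ_max^k. -/
open scoped BigOperators

/-- The set of Markov chains `ε`-conforming to a directed graph with adjacency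
relation `Adj` and stationary distribution `pivec`:
`p_{ij} ≥ ε` on edges, `p_{ij} = 0` off edges, rows sum to one, and `pivec` is
stationary. -/
def Conf {n : ℕ} (Adj : Fin n → Fin n → Prop) (pivec : Fin n → ℝ) (ε : ℝ) :
    Set (Matrix (Fin n) (Fin n) ℝ) :=
  {P | (∀ i j, Adj i j → ε ≤ P i j) ∧ (∀ i j, ¬ Adj i j → P i j = 0) ∧
    (∀ i, ∑ j, P i j = 1) ∧ (∀ j, ∑ i, pivec i * P i j = pivec j)}

/-- The first hitting time probabilities `F_k(i,j)` for a chain `P` with travel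
times `W`: `F_k(i,j) = p_{ij}·1{k = w_{ij}} + Σ_{h≠j} p_{ih} F_{k−w_{ih}}(h,j)`
for `k ≥ 1`, and `F_k = 0` for `k ≤ 0`. -/
def IsHittingProb {n : ℕ} (P : Matrix (Fin n) (Fin n) ℝ)
    (W : Matrix (Fin n) (Fin n) ℕ) (F : ℤ → Fin n → Fin n → ℝ) : Prop :=
  (∀ k : ℤ, k ≤ 0 → ∀ i j, F k i j = 0) ∧
    ∀ k : ℤ, 1 ≤ k → ∀ i j,
      F k i j = (if k = (W i j : ℤ) then P i j else 0) +
        ∑ h : Fin n, if h = j then 0 else P i h * F (k - (W i h : ℤ)) h j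

/-- For each target there is a rank function decreasing along some edge. -/
lemma exists_rank {n : ℕ} (Adj : Fin n → Fin n → Prop)
    (hconn : ∀ i j, Relation.ReflTransGen Adj i j) (j : Fin n) :
    ∃ d : Fin n → ℕ, d j = 0 ∧ ∀ i, i ≠ j → ∃ h, Adj i h ∧ d h + 1 ≤ d i := by
  classical
  let S : ℕ → Fin n → Prop := fun m => Nat.rec (motive := fun _ => Fin n → Prop) (fun i => i = j) 
    (fun _ T i => ∃ h, Adj i h ∧ T h) m
  have hS : ∀ i, ∃ m, S m i := by
    intro i
    induction hconn i j using Relation.ReflTransGen.head_induction_on with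
    | refl => exact ⟨0, rfl⟩
    | head h _ ih =>
      obtain ⟨m, hm⟩ := ih
      exact ⟨m + 1, _, h, hm⟩
  have inst : ∀ i, DecidablePred (fun m => S m i) := fun _ => Classical.decPred _
  refine ⟨fun i => Nat.find (hS i), ?_, ?_⟩
  · rw [Nat.find_eq_zero]; rfl
  · intro i hi
    have hs : S (Nat.find (hS i)) i := Nat.find_spec (hS i)
    rcases hm : Nat.find (hS i) with _ | m
    · rw [hm] at hs; exact absurd hs hi
    · rw [hm] at hs
      obtain ⟨h, h1, h2⟩ := hs
      refine ⟨h, h1, ?_⟩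
      have := Nat.find_min' (hS h) h2
      dsimp only
      omega

/-- Deterministic induction step: a Lyapunov function gives a geometric bound. -/
lemma lyap_bound {n : ℕ} (Adj : Fin n → Fin n → Prop) (W : Matrix (Fin n) (Fin n) ℕ)
    (hW1 : ∀ i j, Adj i j → 1 ≤ W i j) (M : ℕ) (hM : ∀ i j, W i j ≤ M)
    (P : Matrix (Fin n) (Fin n) ℝ) (hP0 : ∀ i j, 0 ≤ P i j)
    (hPn : ∀ i j, ¬ Adj i j → P i j = 0)
    (F : ℤ → Fin n → Fin n → ℝ) (hF : IsHittingProb P W F) (j : Fin n)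
    (U V : Fin n → ℝ) (lam : ℝ) (hl0 : 0 < lam) (hl1 : lam < 1)
    (hV0 : ∀ i, 0 ≤ V i) (hUj : U j = 1) (hUV : ∀ i, i ≠ j → V i = U i)
    (hstep : ∀ i, ∑ h, P i h * U h ≤ lam ^ M * V i) :
    ∀ k : ℕ, ∀ i, F k i j ≤ V i * lam ^ k := by
  intro k
  induction k using Nat.strong_induction_on with
  | _ k ih =>
  intro i
  have hL : 0 < lam ^ M := pow_pos hl0 M
  rcases Nat.eq_zero_or_pos k with hk | hk
  · rw [hF.1 _ (by omega)]
    exact mul_nonneg (hV0 i) (pow_nonneg hl0.le _)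
  have key : lam ^ M * F k i j ≤ lam ^ k * ∑ h, P i h * U h := by
    rw [hF.2 k (by omega) i j]
    have e : (if (k : ℤ) = (W i j : ℤ) then P i j else 0)
        = ∑ h : Fin n, if h = j then (if (k : ℤ) = (W i j : ℤ) then P i j else 0) else 0 := by
      simp
    rw [e, ← Finset.sum_add_distrib, Finset.mul_sum, Finset.mul_sum]
    apply Finset.sum_le_sum
    intro h _
    have hp := hP0 i h
    by_cases hj : h = j
    · subst hj
      simp only [if_true, hUj, add_zero, mul_one]
      split_ifs with hw
      · have : k = W i h := by exact_mod_cast hw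
        have : lam ^ M ≤ lam ^ k := pow_le_pow_of_le_one hl0.le hl1.le (this ▸ hM i h)
        exact mul_le_mul_of_nonneg_right this hp
      · have := pow_nonneg hl0.le k
        simp only [mul_zero]; positivity
    · simp only [hj, if_false, zero_add]
      by_cases hA : Adj i h
      · have hw := hW1 i h hA
        have hVU := hUV h hj
        have : lam ^ M * F (k - (W i h : ℤ)) h j ≤ lam ^ k * U h := by
          by_cases hkw : k ≤ W i h
          · rw [hF.1 _ (by omega), ← hVU, mul_zero]
            exact mul_nonneg (pow_nonneg hl0.le _) (hV0 h)
          · have h1 := ih (k - W i h) (by omega) h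
            rw [Nat.cast_sub (by omega)] at h1
            have h2 : lam ^ M ≤ lam ^ (W i h) := pow_le_pow_of_le_one hl0.le hl1.le (hM i h)
            have h3 : lam ^ k = lam ^ (W i h) * lam ^ (k - W i h) := by
              rw [← pow_add]; congr 1; omega
            calc _ ≤ lam ^ M * (V h * lam ^ (k - W i h)) := mul_le_mul_of_nonneg_left h1 hL.le
              _ ≤ lam ^ (W i h) * (V h * lam ^ (k - W i h)) :=
                mul_le_mul_of_nonneg_right h2 (mul_nonneg (hV0 h) (pow_nonneg hl0.le _))
              _ = _ := by rw [h3, hVU]; ring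
        calc _ = P i h * (lam ^ M * F (k - (W i h : ℤ)) h j) := by ring
          _ ≤ P i h * (lam ^ k * U h) := mul_le_mul_of_nonneg_left this hp
          _ = _ := by ring
      · simp [hPn i h hA]
  have h2 := mul_le_mul_of_nonneg_left (hstep i) (pow_nonneg hl0.le k)
  have h3 : lam ^ M * F k i j ≤ lam ^ M * (V i * lam ^ k) := by
    calc _ ≤ _ := key.trans h2
      _ = _ := by ring
  exact le_of_mul_le_mul_left h3 hL

/-- over the compact set of `ε`-conforming chains there are
uniform constants `c > 0` and `λ_max ∈ (0,1)` such that the first return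
probabilities satisfy `F_k(i,i) ≤ c·λ_max^k` for all chains in the set, all
states `i` and all `k ≥ 1`. -/
theorem uniform_geometric_bound_on_return_probabilities {n : ℕ}
    (Adj : Fin n → Fin n → Prop) (W : Matrix (Fin n) (Fin n) ℕ)
    (pivec : Fin n → ℝ) (ε : ℝ)
    (hconn : ∀ i j, Relation.ReflTransGen Adj i j)
    (hW1 : ∀ i j, Adj i j → 1 ≤ W i j)
    (hW0 : ∀ i j, ¬ Adj i j → W i j = 0)
    (hpi : ∀ i, 0 < pivec i) (hpisum : ∑ i, pivec i = 1)
    (hε : 0 < ε) (hne : (Conf Adj pivec ε).Nonempty)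
    (F : Matrix (Fin n) (Fin n) ℝ → ℤ → Fin n → Fin n → ℝ)
    (hF : ∀ P ∈ Conf Adj pivec ε, IsHittingProb P W (F P)) :
    ∃ c : ℝ, 0 < c ∧ ∃ lam : ℝ, lam ∈ Set.Ioo (0 : ℝ) 1 ∧
      ∀ P ∈ Conf Adj pivec ε, ∀ i : Fin n, ∀ k : ℕ, 1 ≤ k →
        F P k i i ≤ c * lam ^ k := by
  classical
  choose d hd0 hd using fun j => exists_rank Adj hconn j
  obtain ⟨M, hM⟩ : ∃ M, ∀ i j, W i j ≤ M := by
    refine ⟨∑ i, ∑ j, W i j, fun i j => ?_⟩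
    exact (Finset.single_le_sum (f := fun j => W i j) (fun _ _ => Nat.zero_le _)
      (Finset.mem_univ j)).trans (Finset.single_le_sum (f := fun i => ∑ j, W i j)
      (fun _ _ => Nat.zero_le _) (Finset.mem_univ i))
  obtain ⟨D, hD⟩ : ∃ D, ∀ i j, d i j ≤ D := by
    refine ⟨∑ i, ∑ j, d i j, fun i j => ?_⟩
    exact (Finset.single_le_sum (f := fun j => d i j) (fun _ _ => Nat.zero_le _)
      (Finset.mem_univ j)).trans (Finset.single_le_sum (f := fun i => ∑ j, d i j)
      (fun _ _ => Nat.zero_le _) (Finset.mem_univ i))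
  obtain ⟨a, ha0, ha1, haε⟩ : ∃ a : ℝ, 0 < a ∧ a ≤ 1 ∧ 2 * a ≤ ε := by
    refine ⟨min ε 1 / 2, by positivity, ?_, ?_⟩
    · linarith [min_le_right ε 1]
    · linarith [min_le_left ε 1]
  have hb0 : 0 < a ^ D := pow_pos ha0 D
  have hb1 : a ^ D ≤ 1 := pow_le_one₀ ha0.le ha1
  obtain ⟨lam, hl0, hl1, hL⟩ : ∃ lam : ℝ, 0 < lam ∧ lam < 1 ∧ 1 - a ^ D / 2 ≤ lam ^ M := by
    have hM1 : (0 : ℝ) < M + 1 := by positivity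
    set t : ℝ := (a ^ D / 2) / (M + 1) with ht
    have ht0 : 0 < t := by positivity
    have htM : t * (M + 1) = a ^ D / 2 := by rw [ht]; field_simp
    have hMt : 0 ≤ t * M := by positivity
    refine ⟨1 - t, by nlinarith, by linarith, ?_⟩
    have := one_add_mul_le_pow (a := -t) (by nlinarith) M
    rw [← sub_eq_add_neg] at this
    nlinarith
  refine ⟨4, by norm_num, lam, ⟨hl0, hl1⟩, ?_⟩
  intro P hP j k _
  have hFP := hF P hP
  obtain ⟨hPe, hPn, hPs, -⟩ := hP
  have hP0 : ∀ i j, 0 ≤ P i j := by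
    intro i j
    by_cases h : Adj i j
    · exact hε.le.trans (hPe i j h)
    · exact (hPn i j h).ge
  have hpow : ∀ i, 0 < a ^ d j i ∧ a ^ d j i ≤ 1 ∧ a ^ D ≤ a ^ d j i := fun i =>
    ⟨pow_pos ha0 _, pow_le_one₀ ha0.le ha1, pow_le_pow_of_le_one ha0.le ha1 (hD j i)⟩
  have hsum : ∀ i, ∑ h, P i h * (2 - a ^ d j h) = 2 - ∑ h, P i h * a ^ d j h := by
    intro i
    simp only [mul_sub, Finset.sum_sub_distrib, ← Finset.sum_mul, hPs i, one_mul]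
  have hnn : ∀ i h, 0 ≤ P i h * a ^ d j h := fun i h => mul_nonneg (hP0 i h) (hpow h).1.le
  have := lyap_bound Adj W hW1 M hM P hP0 hPn (F P) hFP j (fun i => 2 - a ^ d j i)
    (fun i => if i = j then 4 else 2 - a ^ d j i) lam hl0 hl1 ?_ ?_ ?_ ?_ k j
  · simpa using this
  · intro i
    split_ifs
    · norm_num
    · linarith [(hpow i).2.1]
  · simp only [hd0, pow_zero]; norm_num
  · intro i hi
    simp [hi]
  · intro i
    rw [hsum i]
    split_ifs with hi
    · have := Finset.sum_nonneg (fun h (_ : h ∈ Finset.univ) => hnn i h)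
      linarith
    · obtain ⟨h, hA, hdh⟩ := hd j i hi
      have h1 := Finset.single_le_sum (f := fun h => P i h * a ^ d j h) (fun h _ => hnn i h)
        (Finset.mem_univ h)
      have h2 : ε * a ^ d j h ≤ P i h * a ^ d j h :=
        mul_le_mul_of_nonneg_right (hPe i h hA) (hpow h).1.le
      have h3 : 2 * a * a ^ d j h ≤ ε * a ^ d j h :=
        mul_le_mul_of_nonneg_right haε (hpow h).1.le
      have h4 : a ^ d j i ≤ a ^ (d j h + 1) := pow_le_pow_of_le_one ha0.le ha1 hdh
      rw [pow_succ] at h4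
      obtain ⟨p0, p1, p2⟩ := hpow i
      have h5 := mul_le_mul_of_nonneg_right hL (show 0 ≤ 2 - a ^ d j i by linarith)
      nlinarith [mul_pos hb0 p0]
end

section
/- Fix a strongly connected directed weighted graph G = (V, E, W) with n nodes, a stationary distribution π > 0, and ε > 0 such that P^ε_{G,π} is nonempty. Then for each state i the series H(T_{ii})(P) = −Σ_{k=1}^∞ F_k(i,i) log F_k(i,i) converges uniformly on P^ε_{G,π}, and the functions P ↦ H(T_{ii})(P) and the return time entropy P ↦ J(P) = Σ_{i=1}^n π_i H(T_{ii})(P) are continuous on P^ε_{G,π}. -/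
open scoped BigOperators
open Real Filter

lemma rte_nonneg {n : ℕ} {Adj : Fin n → Fin n → Prop} {pivec : Fin n → ℝ} {ε : ℝ} (hε : 0 < ε)
    {P : Matrix (Fin n) (Fin n) ℝ} (hP : P ∈ Conf Adj pivec ε) (i j : Fin n) : 0 ≤ P i j := by
  by_cases h : Adj i j
  · exact hε.le.trans (hP.1 i j h)
  · exact (hP.2.1 i j h).ge

def rteR {n : ℕ} (Adj : Fin n → Fin n → Prop) (j : Fin n) : ℕ → Fin n → Prop
  | 0, i => i = j
  | m + 1, i => ∃ h, Adj i h ∧ rteR Adj j m h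

lemma rte_dist {n : ℕ} (Adj : Fin n → Fin n → Prop)
    (hconn : ∀ i j, Relation.ReflTransGen Adj i j) (j : Fin n) :
    ∃ d : Fin n → ℕ, d j = 0 ∧ ∀ i, i ≠ j → ∃ h, Adj i h ∧ d h < d i := by
  classical
  have hex : ∀ i, ∃ m, rteR Adj j m i := by
    intro i
    induction hconn i j using Relation.ReflTransGen.head_induction_on with
    | refl => exact ⟨0, rfl⟩
    | head h _ ih =>
      obtain ⟨m, hm⟩ := ih
      exact ⟨m + 1, _, h, hm⟩
  refine ⟨fun i => Nat.find (hex i), ?_, ?_⟩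
  · exact (Nat.find_eq_zero (hex j)).2 rfl
  · intro i hij
    have hs := Nat.find_spec (hex i)
    cases hm : Nat.find (hex i) with
    | zero => rw [hm] at hs; exact absurd hs hij
    | succ m =>
      rw [hm] at hs
      obtain ⟨h, h1, h2⟩ := hs
      refine ⟨h, h1, ?_⟩
      have := Nat.find_min' (hex h) h2
      show Nat.find (hex h) < Nat.find (hex i)
      omega

lemma rte_lyap {n : ℕ} (Adj : Fin n → Fin n → Prop) (pivec : Fin n → ℝ) (ε : ℝ)
    (hconn : ∀ i j, Relation.ReflTransGen Adj i j) (hε : 0 < ε) (j : Fin n) (M : ℕ) :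
    ∃ (V : Fin n → ℝ) (ρ : ℝ), (∀ i, 0 ≤ V i) ∧ 0 < ρ ∧ ρ < 1 ∧
      ∀ P ∈ Conf Adj pivec ε, ∀ i,
        ∑ h, P i h * (if h = j then 1 else V h) ≤ ρ ^ M * V i := by
  obtain ⟨d, hd0, hd⟩ := rte_dist Adj hconn j
  obtain ⟨δ, hδ0, hδ1, hδε⟩ : ∃ δ : ℝ, 0 < δ ∧ δ ≤ 1 ∧ 2 * δ ≤ ε := by
    refine ⟨min ε 1 / 2, by positivity, ?_, ?_⟩
    · have := min_le_right ε 1; linarith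
    · have := min_le_left ε 1; linarith
  have hp0 : ∀ m : ℕ, 0 < δ ^ m := fun m => by positivity
  have hp1 : ∀ m : ℕ, δ ^ m ≤ 1 := fun m => pow_le_one₀ hδ0.le hδ1
  let V : Fin n → ℝ := fun i => if i = j then 3 else 2 - δ ^ d i
  let A : Fin n → ℝ := fun i => if i = j then 2 else 2 - 2 * δ ^ d i
  have hAV : ∀ i, A i < V i := by
    intro i
    simp only [A, V]
    split_ifs
    · norm_num
    · have := hp0 (d i); linarith
  have hev : ∀ᶠ ρ : ℝ in nhdsWithin 1 (Set.Iio 1), ∀ i, A i < ρ ^ M * V i := by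
    rw [Filter.eventually_all]
    intro i
    have hc : Tendsto (fun ρ : ℝ => ρ ^ M * V i) (nhdsWithin 1 (Set.Iio 1)) (nhds (V i)) := by
      have : Continuous (fun ρ : ℝ => ρ ^ M * V i) := by fun_prop
      have h := this.tendsto 1
      simp only [one_pow, one_mul] at h
      exact h.mono_left nhdsWithin_le_nhds
    exact hc.eventually (lt_mem_nhds (hAV i))
  have hev0 : ∀ᶠ ρ : ℝ in nhdsWithin 1 (Set.Iio 1), 0 < ρ :=
    nhdsWithin_le_nhds (lt_mem_nhds one_pos)
  obtain ⟨ρ, ⟨h1, h2⟩, h3⟩ := ((hev.and hev0).and self_mem_nhdsWithin).exists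
  refine ⟨V, ρ, ?_, h2, h3, ?_⟩
  · intro i
    simp only [V]
    split_ifs
    · norm_num
    · have := hp1 (d i); linarith
  · intro P hP i
    refine le_trans ?_ (h1 i).le
    have hP0 := rte_nonneg hε hP i
    have e1 : ∑ h, P i h * (if h = j then 1 else V h) = 2 - ∑ h, P i h * δ ^ d h := by
      have : ∀ h, P i h * (if h = j then 1 else V h) = P i h * 2 - P i h * δ ^ d h := by
        intro h
        by_cases hh : h = j
        · subst hh; simp [hd0]; ring
        · simp [V, hh]; ring
      simp_rw [this]
      rw [Finset.sum_sub_distrib, ← Finset.sum_mul, hP.2.2.1 i, one_mul]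
    rw [e1]
    have hnn : ∀ h, 0 ≤ P i h * δ ^ d h := fun h => mul_nonneg (hP0 h) (hp0 _).le
    by_cases hij : i = j
    · simp only [A, hij, if_true]
      have := Finset.sum_nonneg (fun h (_ : h ∈ Finset.univ) => hnn h)
      rw [hij] at this
      linarith
    · simp only [A, hij, if_false]
      obtain ⟨h, ha, hlt⟩ := hd i hij
      have s1 := Finset.single_le_sum (fun h _ => hnn h) (Finset.mem_univ h)
      have s2 : 2 * δ ^ d i ≤ P i h * δ ^ d h := by
        have : δ ^ d i ≤ δ ^ (d h + 1) := pow_le_pow_of_le_one hδ0.le hδ1 hlt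
        calc 2 * δ ^ d i ≤ 2 * δ ^ (d h + 1) := by linarith
          _ = (2 * δ) * δ ^ d h := by ring
          _ ≤ P i h * δ ^ d h :=
            mul_le_mul_of_nonneg_right (hδε.trans (hP.1 i h ha)) (hp0 _).le
      linarith

lemma rte_bound {n : ℕ} (Adj : Fin n → Fin n → Prop) (W : Matrix (Fin n) (Fin n) ℕ)
    (pivec : Fin n → ℝ) (ε : ℝ) (hW1 : ∀ i j, Adj i j → 1 ≤ W i j) (hε : 0 < ε)
    (P : Matrix (Fin n) (Fin n) ℝ) (hP : P ∈ Conf Adj pivec ε)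
    (F : ℤ → Fin n → Fin n → ℝ) (hF : IsHittingProb P W F) (j : Fin n) (M : ℕ)
    (hM : ∀ i j, W i j ≤ M) (V : Fin n → ℝ) (ρ : ℝ) (hV : ∀ i, 0 ≤ V i) (h0 : 0 < ρ) (h1 : ρ < 1)
    (hL : ∀ i, ∑ h, P i h * (if h = j then 1 else V h) ≤ ρ ^ M * V i) :
    ∀ m : ℕ, ∀ k : ℤ, k ≤ m → ∀ i, 0 ≤ F k i j ∧ F k i j ≤ V i * ρ ^ k := by
  have base : ∀ k : ℤ, k ≤ 0 → ∀ i, 0 ≤ F k i j ∧ F k i j ≤ V i * ρ ^ k := by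
    intro k hk i
    rw [hF.1 k hk]
    exact ⟨le_rfl, mul_nonneg (hV i) (zpow_pos h0 k).le⟩
  intro m
  induction m with
  | zero => intro k hk; exact base k (by simpa using hk)
  | succ m ih =>
    intro k hk i
    rcases le_or_gt k 0 with hk0 | hk0
    · exact base k hk0 i
    have hP0 := rte_nonneg hε hP i
    rw [hF.2 k hk0 i j]
    have hw : ∀ h, ρ ^ (k - (W i h : ℤ)) ≤ ρ ^ k * (ρ ^ M)⁻¹ := by
      intro h
      rw [zpow_sub₀ h0.ne', div_eq_mul_inv, zpow_natCast]
      have : ρ ^ M ≤ ρ ^ W i h := pow_le_pow_of_le_one h0.le h1.le (hM i h)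
      have hz := (zpow_pos h0 k).le
      gcongr
    have key : ∀ h, 0 ≤ P i h * F (k - (W i h : ℤ)) h j ∧
        P i h * F (k - (W i h : ℤ)) h j ≤ P i h * V h * (ρ ^ k * (ρ ^ M)⁻¹) := by
      intro h
      by_cases ha : Adj i h
      · have hw1 := hW1 i h ha
        obtain ⟨a, b⟩ := ih (k - (W i h : ℤ)) (by push_cast at hk; omega) h
        refine ⟨mul_nonneg (hP0 h) a, ?_⟩
        rw [mul_assoc]
        exact mul_le_mul_of_nonneg_left
          (b.trans (mul_le_mul_of_nonneg_left (hw h) (hV h))) (hP0 h)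
      · simp [hP.2.1 i h ha]
    have hz : 0 ≤ ρ ^ k * (ρ ^ M)⁻¹ := by have := zpow_pos h0 k; positivity
    constructor
    · apply add_nonneg
      · split_ifs
        · exact hP0 j
        · exact le_rfl
      · apply Finset.sum_nonneg
        intro h _
        split_ifs
        · exact le_rfl
        · exact (key h).1
    · have a1 : (if k = (W i j : ℤ) then P i j else 0) ≤ P i j * (ρ ^ k * (ρ ^ M)⁻¹) := by
        split_ifs with hkw
        · have := hw j
          rw [← hkw, sub_self, zpow_zero] at this
          exact le_mul_of_one_le_right (hP0 j) this
        · exact mul_nonneg (hP0 j) hz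
      have a2 : (∑ h : Fin n, if h = j then 0 else P i h * F (k - (W i h : ℤ)) h j) ≤
          ∑ h : Fin n, if h = j then 0 else P i h * V h * (ρ ^ k * (ρ ^ M)⁻¹) := by
        apply Finset.sum_le_sum
        intro h _
        split_ifs
        · exact le_rfl
        · exact (key h).2
      have a3 : P i j * (ρ ^ k * (ρ ^ M)⁻¹) +
          (∑ h : Fin n, if h = j then 0 else P i h * V h * (ρ ^ k * (ρ ^ M)⁻¹)) =
          (∑ h, P i h * (if h = j then 1 else V h)) * (ρ ^ k * (ρ ^ M)⁻¹) := by
        have : P i j * (ρ ^ k * (ρ ^ M)⁻¹) =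
          ∑ h : Fin n, if h = j then P i h * (ρ ^ k * (ρ ^ M)⁻¹) else 0 := by simp
        rw [this, ← Finset.sum_add_distrib, Finset.sum_mul]
        apply Finset.sum_congr rfl
        intro h _
        split_ifs <;> ring
      calc _ ≤ _ := add_le_add a1 a2
        _ = _ := a3
        _ ≤ (ρ ^ M * V i) * (ρ ^ k * (ρ ^ M)⁻¹) := mul_le_mul_of_nonneg_right (hL i) hz
        _ = V i * ρ ^ k := by
          have : ρ ^ M ≠ 0 := by positivity
          field_simp

lemma rte_cont {n : ℕ} (Adj : Fin n → Fin n → Prop) (W : Matrix (Fin n) (Fin n) ℕ)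
    (pivec : Fin n → ℝ) (ε : ℝ) (hW1 : ∀ i j, Adj i j → 1 ≤ W i j)
    (F : Matrix (Fin n) (Fin n) ℝ → ℤ → Fin n → Fin n → ℝ)
    (hF : ∀ P ∈ Conf Adj pivec ε, IsHittingProb P W (F P)) (j : Fin n) :
    ∀ m : ℕ, ∀ k : ℤ, k ≤ m → ∀ i, ContinuousOn (fun P => F P k i j) (Conf Adj pivec ε) := by
  have base : ∀ k : ℤ, k ≤ 0 → ∀ i, ContinuousOn (fun P => F P k i j) (Conf Adj pivec ε) := by
    intro k hk i
    exact (continuousOn_const (c := (0 : ℝ))).congr (fun P hP => (hF P hP).1 k hk i j)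
  intro m
  induction m with
  | zero => intro k hk; exact base k (by simpa using hk)
  | succ m ih =>
    intro k hk i
    rcases le_or_gt k 0 with hk0 | hk0
    · exact base k hk0 i
    refine ContinuousOn.congr ?_ (fun P hP => (hF P hP).2 k hk0 i j)
    have hent : ∀ h, Continuous (fun P : Matrix (Fin n) (Fin n) ℝ => P i h) :=
      fun h => by fun_prop
    apply ContinuousOn.add
    · split_ifs
      · exact (hent j).continuousOn
      · exact continuousOn_const
    · apply continuousOn_finsetSum
      intro h _
      split_ifs
      · exact continuousOn_const
      · by_cases ha : Adj i h
        · have hw1 := hW1 i h ha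
          exact (hent h).continuousOn.mul (ih _ (by push_cast at hk; omega) h)
        · exact (continuousOn_const (c := (0 : ℝ))).congr
            (fun P hP => by simp [hP.2.1 i h ha])

lemma rte_negMulLog {x : ℝ} (hx : 0 ≤ x) : |Real.negMulLog x| ≤ 2 * (x + 1) * √x := by
  rcases hx.eq_or_lt with rfl | hx
  · simp
  have hs : 0 < √x := Real.sqrt_pos.2 hx
  have hsq : √x * √x = x := Real.mul_self_sqrt hx.le
  have hl : Real.log x = 2 * Real.log √x := by
    rw [Real.log_sqrt hx.le]; ring
  have l1 := Real.log_le_sub_one_of_pos hs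
  have l2 := Real.log_le_sub_one_of_pos (inv_pos.2 hs)
  rw [Real.log_inv] at l2
  have l3 : |Real.log x| ≤ 2 * (√x + (√x)⁻¹) := by
    have := inv_pos.2 hs
    rw [hl, abs_le]; constructor <;> linarith
  rw [Real.negMulLog, abs_mul, abs_neg, abs_of_pos hx]
  calc x * |Real.log x| ≤ x * (2 * (√x + (√x)⁻¹)) := by gcongr
    _ = 2 * (x + 1) * √x := by
      generalize √x = s at *
      subst hsq
      field_simp

/-- the series `H(T_ii)(P) = −Σ_{k≥1} F_k(i,i) log F_k(i,i)`
converges uniformly on the `ε`-conforming set, and the functions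
`P ↦ H(T_ii)(P)` and `P ↦ J(P) = Σ_i π_i H(T_ii)(P)` are continuous there. -/
theorem return_time_entropy_continuity {n : ℕ}
    (Adj : Fin n → Fin n → Prop) (W : Matrix (Fin n) (Fin n) ℕ)
    (pivec : Fin n → ℝ) (ε : ℝ)
    (hconn : ∀ i j, Relation.ReflTransGen Adj i j)
    (hW1 : ∀ i j, Adj i j → 1 ≤ W i j)
    (hW0 : ∀ i j, ¬ Adj i j → W i j = 0)
    (hpi : ∀ i, 0 < pivec i) (hpisum : ∑ i, pivec i = 1)
    (hε : 0 < ε) (hne : (Conf Adj pivec ε).Nonempty)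
    (F : Matrix (Fin n) (Fin n) ℝ → ℤ → Fin n → Fin n → ℝ)
    (hF : ∀ P ∈ Conf Adj pivec ε, IsHittingProb P W (F P)) :
    (∀ i : Fin n,
      TendstoUniformlyOn
        (fun (N : ℕ) (P : Matrix (Fin n) (Fin n) ℝ) =>
          ∑ k ∈ Finset.range N, Real.negMulLog (F P ((k : ℤ) + 1) i i))
        (fun P => ∑' k : ℕ, Real.negMulLog (F P ((k : ℤ) + 1) i i))
        atTop (Conf Adj pivec ε)) ∧
    (∀ i : Fin n,
      ContinuousOn (fun P => ∑' k : ℕ, Real.negMulLog (F P ((k : ℤ) + 1) i i))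
        (Conf Adj pivec ε)) ∧
    ContinuousOn
      (fun P => ∑ i : Fin n, pivec i * ∑' k : ℕ, Real.negMulLog (F P ((k : ℤ) + 1) i i))
      (Conf Adj pivec ε) := by
  obtain ⟨M, hM⟩ : ∃ M : ℕ, ∀ i j, W i j ≤ M :=
    ⟨∑ i, ∑ j, W i j, fun i j =>
      (Finset.single_le_sum (f := fun j => W i j) (fun _ _ => Nat.zero_le _)
        (Finset.mem_univ j)).trans
      (Finset.single_le_sum (f := fun i => ∑ j, W i j) (fun _ _ => Nat.zero_le _)
        (Finset.mem_univ i))⟩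
  have hdom : ∀ i : Fin n, ∃ u : ℕ → ℝ, Summable u ∧ ∀ (k : ℕ), ∀ P ∈ Conf Adj pivec ε,
      ‖Real.negMulLog (F P ((k : ℤ) + 1) i i)‖ ≤ u k := by
    intro i
    obtain ⟨V, ρ, hV, h0, h1, hL⟩ := rte_lyap Adj pivec ε hconn hε i M
    refine ⟨fun k => 2 * (V i + 1) * √(V i) * (√ρ) ^ k, ?_, ?_⟩
    · apply Summable.mul_left
      apply summable_geometric_of_lt_one (Real.sqrt_nonneg _)
      rw [Real.sqrt_lt' one_pos]; simpa using h1
    · intro k P hP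
      obtain ⟨a, b⟩ := rte_bound Adj W pivec ε hW1 hε P hP (F P) (hF P hP) i M hM V ρ hV h0 h1
        (hL P hP) (k + 1) ((k : ℤ) + 1) (by push_cast; exact le_rfl) i
      have b' : F P ((k : ℤ) + 1) i i ≤ V i * ρ ^ k := by
        refine b.trans (mul_le_mul_of_nonneg_left ?_ (hV i))
        have : ρ ^ ((k : ℤ) + 1) = ρ ^ (k + 1) := by exact_mod_cast zpow_natCast ρ (k + 1)
        rw [this]
        exact pow_le_pow_of_le_one h0.le h1.le (Nat.le_succ k)
      have b1 : F P ((k : ℤ) + 1) i i ≤ V i :=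
        b'.trans (mul_le_of_le_one_right (hV i) (pow_le_one₀ h0.le h1.le))
      rw [Real.norm_eq_abs]
      refine (rte_negMulLog a).trans ?_
      have hs : √(F P ((k : ℤ) + 1) i i) ≤ √(V i) * (√ρ) ^ k := by
        refine (Real.sqrt_le_sqrt b').trans (le_of_eq ?_)
        have hk : √(ρ ^ k) = (√ρ) ^ k := by
          rw [Real.sqrt_eq_iff_mul_self_eq (pow_nonneg h0.le k)
            (pow_nonneg (Real.sqrt_nonneg ρ) k), ← mul_pow, Real.mul_self_sqrt h0.le]
        rw [Real.sqrt_mul (hV i), hk]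
      have hVi := hV i
      calc _ ≤ 2 * (V i + 1) * (√(V i) * (√ρ) ^ k) := by gcongr
        _ = _ := by ring
  have hcont : ∀ i : Fin n,
      ContinuousOn (fun P => ∑' k : ℕ, Real.negMulLog (F P ((k : ℤ) + 1) i i))
        (Conf Adj pivec ε) := by
    intro i
    obtain ⟨u, hu, hb⟩ := hdom i
    refine continuousOn_tsum (fun k => ?_) hu hb
    exact Real.continuous_negMulLog.comp_continuousOn
      (rte_cont Adj W pivec ε hW1 F hF i (k + 1) _ (by push_cast; exact le_rfl) i)
  refine ⟨fun i => ?_, hcont, ?_⟩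
  · obtain ⟨u, hu, hb⟩ := hdom i
    exact tendstoUniformlyOn_tsum_nat hu hb
  · exact continuousOn_finsetSum _ (fun i _ => continuousOn_const.mul (hcont i))
end

section
/- Let G be a strongly connected directed graph with n nodes and unitary travel times (w_{ij} = 1 on every edge), let π > 0 be a stationary distribution, and let ε > 0 be such that P^ε_{G,π} is nonempty. Then for every P ∈ P^ε_{G,π}, the return time entropy satisfies J(P) ≤ −Σ_{i=1}^n ( π_i log π_i + (1 − π_i) log(1 − π_i) ). -/
open scoped BigOperators
open Real

/-- First hitting time probabilities for unitary travel times: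
`F_1 = P` and `F_k(i,j) = Σ_{h≠j} p_{ih} F_{k−1}(h,j)` for `k ≥ 2`. -/
def IsHittingProbUnit {n : ℕ} (P : Matrix (Fin n) (Fin n) ℝ)
    (F : ℕ → Fin n → Fin n → ℝ) : Prop :=
  (∀ i j, F 1 i j = P i j) ∧
    ∀ k : ℕ, 2 ≤ k → ∀ i j,
      F k i j = ∑ h : Fin n, if h = j then 0 else P i h * F (k - 1) h j

/-- Survival probabilities. -/
def surv {n : ℕ} (P : Matrix (Fin n) (Fin n) ℝ) (j : Fin n) : ℕ → Fin n → ℝ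
  | 0 => fun _ => 1
  | k + 1 => fun i => ∑ h : Fin n, if h = j then 0 else P i h * surv P j k h

lemma gibbs_pt (x q : ℝ) (hx : 0 ≤ x) (hq : 0 < q) :
    Real.negMulLog x ≤ -(x * Real.log q) + q - x := by
  rcases hx.eq_or_lt with h | h
  · subst h; simp [hq.le]
  · have h1 := Real.log_le_sub_one_of_pos (div_pos hq h)
    rw [Real.log_div hq.ne' h.ne'] at h1
    have h2 := mul_le_mul_of_nonneg_left h1 hx
    have h3 : x * (q / x - 1) = q - x := by field_simp
    rw [h3] at h2
    unfold Real.negMulLog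
    linarith

lemma sum_tele (u : ℕ → ℝ) (N : ℕ) :
    ∑ k ∈ Finset.range N, (u k - u (k + 1)) = u 0 - u N := by
  exact Finset.sum_range_sub' u N

lemma sum_k (u : ℕ → ℝ) (N : ℕ) :
    ∑ k ∈ Finset.range N, (k : ℝ) * (u k - u (k + 1))
      = ∑ k ∈ Finset.range (N + 1), u k - u 0 - N * u N := by
  induction N with
  | zero => simp
  | succ N ih => 
    rw [Finset.sum_range_succ, ih, Finset.sum_range_succ u (N + 1)]
    push_cast; ring

lemma entropy_bound (p : ℝ) (hp : 0 < p) (hp1 : p < 1) (u : ℕ → ℝ)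
    (h0 : u 0 = 1) (hnn : ∀ k, 0 ≤ u k) (hanti : ∀ k, u (k + 1) ≤ u k)
    (hsum : ∀ N, p * ∑ k ∈ Finset.range N, u k ≤ 1) :
    p * ∑' k, Real.negMulLog (u k - u (k + 1)) ≤
      -(p * Real.log p + (1 - p) * Real.log (1 - p)) := by
  have hq : 0 < 1 - p := by linarith
  have hu1 : ∀ k, u k ≤ 1 := by
    intro k
    induction k with
    | zero => rw [h0]
    | succ k ih => exact (hanti k).trans ih
  have hsum' : ∀ N, ∑ k ∈ Finset.range N, u k ≤ 1 / p := by
    intro N; rw [le_div_iff₀ hp]; linarith [hsum N]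
  have hlim : Filter.Tendsto u Filter.atTop (nhds 0) :=
    (summable_of_sum_range_le hnn hsum').tendsto_atTop_zero
  have hlp : Real.log p ≤ 0 := Real.log_nonpos hp.le hp1.le
  have hlq : Real.log (1 - p) ≤ 0 := Real.log_nonpos hq.le (by linarith)
  have hfn : ∀ k, 0 ≤ Real.negMulLog (u k - u (k + 1)) := fun k =>
    Real.negMulLog_nonneg (by linarith [hanti k]) (by linarith [hu1 k, hnn (k + 1)])
  set C := -Real.log p - Real.log (1 - p) * (1 / p - 1) with hC
  have hpart : ∀ N, ∑ k ∈ Finset.range N, Real.negMulLog (u k - u (k + 1)) ≤ C + u N := by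
    intro N
    have hgeo : ∑ k ∈ Finset.range N, p * (1 - p) ^ k = 1 - (1 - p) ^ N := by
      have := mul_neg_geom_sum (1 - p) N
      rw [← Finset.mul_sum]; rw [← this]; ring
    calc ∑ k ∈ Finset.range N, Real.negMulLog (u k - u (k + 1))
        ≤ ∑ k ∈ Finset.range N, (-Real.log p * (u k - u (k + 1))
            + (-Real.log (1 - p)) * ((k : ℝ) * (u k - u (k + 1)))
            + p * (1 - p) ^ k - (u k - u (k + 1))) := by
          apply Finset.sum_le_sum
          intro k _
          have := gibbs_pt (u k - u (k + 1)) (p * (1 - p) ^ k) (by linarith [hanti k])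
            (by positivity)
          rw [Real.log_mul hp.ne' (by positivity), Real.log_pow] at this
          linarith
      _ = -Real.log p * (1 - u N)
            + (-Real.log (1 - p)) * (∑ k ∈ Finset.range (N + 1), u k - 1 - N * u N)
            + (1 - (1 - p) ^ N) - (1 - u N) := by
          rw [Finset.sum_sub_distrib, Finset.sum_add_distrib, Finset.sum_add_distrib,
            ← Finset.mul_sum, ← Finset.mul_sum, sum_tele, sum_k, hgeo, h0]
      _ ≤ C + u N := by
          have a1 : -Real.log p * (1 - u N) ≤ -Real.log p * 1 :=
            mul_le_mul_of_nonneg_left (by linarith [hnn N]) (by linarith)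
          have a2 : (-Real.log (1 - p)) * (∑ k ∈ Finset.range (N + 1), u k - 1 - N * u N)
              ≤ (-Real.log (1 - p)) * (1 / p - 1) := by
            apply mul_le_mul_of_nonneg_left _ (by linarith)
            have : 0 ≤ (N : ℝ) * u N := mul_nonneg (Nat.cast_nonneg _) (hnn N)
            linarith [hsum' (N + 1)]
          have a3 : 0 ≤ (1 - p) ^ N := by positivity
          rw [hC]; linarith
  have hC2 : ∀ N, ∑ k ∈ Finset.range N, Real.negMulLog (u k - u (k + 1)) ≤ C := by
    intro N
    have ht : Filter.Tendsto (fun M => C + u M) Filter.atTop (nhds C) := by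
      simpa using hlim.const_add C
    apply ge_of_tendsto ht
    filter_upwards [Filter.eventually_ge_atTop N] with M hM
    refine le_trans ?_ (hpart M)
    exact Finset.sum_le_sum_of_subset_of_nonneg (Finset.range_mono hM) (fun k _ _ => hfn k)
  have hts := Real.tsum_le_of_sum_range_le hfn hC2
  calc _ ≤ p * C := mul_le_mul_of_nonneg_left hts hp.le
    _ = _ := by rw [hC]; field_simp; ring

lemma surv_nonneg {n : ℕ} (P : Matrix (Fin n) (Fin n) ℝ) (hP : ∀ i j, 0 ≤ P i j)
    (j : Fin n) (k : ℕ) : ∀ i, 0 ≤ surv P j k i := by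
  induction k with
  | zero => intro i; simp [surv]
  | succ k ih =>
    intro i
    apply Finset.sum_nonneg
    intro h _
    split_ifs
    · exact le_rfl
    · exact mul_nonneg (hP _ _) (ih h)

lemma surv_F {n : ℕ} (P : Matrix (Fin n) (Fin n) ℝ) (hP1 : ∀ i, ∑ j, P i j = 1)
    (F : ℕ → Fin n → Fin n → ℝ) (hF : IsHittingProbUnit P F) (j : Fin n) (k : ℕ) :
    ∀ i, F (k + 1) i j = surv P j k i - surv P j (k + 1) i := by
  induction k with
  | zero =>
    intro i
    have h : ∑ h, P i h = P i j + ∑ h, if h = j then 0 else P i h * 1 := by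
      rw [show P i j = ∑ h, if h = j then P i h else 0 by simp, ← Finset.sum_add_distrib]
      apply Finset.sum_congr rfl
      intro h _
      split_ifs <;> simp
    rw [hP1] at h
    simp only [zero_add, hF.1, surv]
    linarith
  | succ k ih =>
    intro i
    rw [hF.2 (k + 1 + 1) (by omega) i j]
    show _ = (∑ h : Fin n, if h = j then 0 else P i h * surv P j k h)
      - (∑ h : Fin n, if h = j then 0 else P i h * surv P j (k + 1) h)
    rw [← Finset.sum_sub_distrib]
    apply Finset.sum_congr rfl
    intro h _
    split_ifs
    · simp
    · rw [show k + 1 + 1 - 1 = k + 1 by omega, ih h]; ring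

lemma F_nonneg {n : ℕ} (P : Matrix (Fin n) (Fin n) ℝ) (hP : ∀ i j, 0 ≤ P i j)
    (F : ℕ → Fin n → Fin n → ℝ) (hF : IsHittingProbUnit P F) (j : Fin n) (k : ℕ) :
    ∀ i, 0 ≤ F (k + 1) i j := by
  induction k with
  | zero => intro i; rw [zero_add, hF.1]; exact hP i j
  | succ k ih =>
    intro i
    rw [hF.2 (k + 1 + 1) (by omega) i j]
    apply Finset.sum_nonneg
    intro h _
    split_ifs
    · exact le_rfl
    · exact mul_nonneg (hP _ _) (ih h)

lemma surv_stat {n : ℕ} (P : Matrix (Fin n) (Fin n) ℝ) (w : Fin n → ℝ)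
    (hw : ∀ j, ∑ i, w i * P i j = w j) (j : Fin n) (k : ℕ) :
    ∑ i, w i * surv P j (k + 1) i = ∑ i, w i * surv P j k i - w j * surv P j k j := by
  have h1 : ∑ i, w i * surv P j (k + 1) i
      = ∑ h, if h = j then 0 else w h * surv P j k h := by
    simp only [surv, Finset.mul_sum]
    rw [Finset.sum_comm]
    apply Finset.sum_congr rfl
    intro h _
    split_ifs
    · simp
    · rw [← hw h, Finset.sum_mul]
      apply Finset.sum_congr rfl
      intro i _
      ring
  rw [h1, show w j * surv P j k j = ∑ h, if h = j then w h * surv P j k h else 0 by simp,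
    ← Finset.sum_sub_distrib]
  apply Finset.sum_congr rfl
  intro h _
  split_ifs <;> simp

lemma surv_sum {n : ℕ} (P : Matrix (Fin n) (Fin n) ℝ) (hP : ∀ i j, 0 ≤ P i j)
    (w : Fin n → ℝ) (hw0 : ∀ i, 0 < w i) (hw1 : ∑ i, w i = 1)
    (hw : ∀ j, ∑ i, w i * P i j = w j) (j : Fin n) (N : ℕ) :
    w j * ∑ k ∈ Finset.range N, surv P j k j ≤ 1 := by
  have h : w j * ∑ k ∈ Finset.range N, surv P j k j = 1 - ∑ i, w i * surv P j N i := by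
    induction N with
    | zero => simp [surv, hw1]
    | succ N ih => rw [Finset.sum_range_succ, mul_add, ih, surv_stat P w hw]; ring
  have : 0 ≤ ∑ i, w i * surv P j N i :=
    Finset.sum_nonneg fun i _ => mul_nonneg (hw0 i).le (surv_nonneg P hP j N i)
  linarith

/-- for a strongly connected graph with unitary travel times, the
return time entropy of every `ε`-conforming chain is upper bounded by
`−Σ_i (π_i log π_i + (1 − π_i) log(1 − π_i))`. -/
theorem return_time_entropy_upper_bound {n : ℕ}
    (Adj : Fin n → Fin n → Prop) (pivec : Fin n → ℝ) (ε : ℝ)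
    (hconn : ∀ i j, Relation.ReflTransGen Adj i j)
    (hpi : ∀ i, 0 < pivec i) (hpisum : ∑ i, pivec i = 1)
    (hε : 0 < ε) (hne : (Conf Adj pivec ε).Nonempty)
    (F : Matrix (Fin n) (Fin n) ℝ → ℕ → Fin n → Fin n → ℝ)
    (hF : ∀ P ∈ Conf Adj pivec ε, IsHittingProbUnit P (F P)) :
    ∀ P ∈ Conf Adj pivec ε,
      (∑ i : Fin n, pivec i * ∑' k : ℕ, Real.negMulLog (F P (k + 1) i i)) ≤
        -∑ i : Fin n,
          (pivec i * Real.log (pivec i) + (1 - pivec i) * Real.log (1 - pivec i)) := by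
  intro P hPm
  have hFP := hF P hPm
  obtain ⟨hA, hB, hP1, hst⟩ := hPm
  have hP : ∀ i j, 0 ≤ P i j := by
    intro i j
    by_cases h : Adj i j
    · exact hε.le.trans (hA i j h)
    · rw [hB i j h]
  rw [← Finset.sum_neg_distrib]
  apply Finset.sum_le_sum
  intro i _
  have hle : pivec i ≤ 1 := by
    rw [← hpisum]
    exact Finset.single_le_sum (fun j _ => (hpi j).le) (Finset.mem_univ i)
  rcases hle.lt_or_eq with hlt | heq
  · simp_rw [surv_F P hP1 (F P) hFP i _ i]
    refine entropy_bound (pivec i) (hpi i) hlt (fun k => surv P i k i) rfl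
      (fun k => surv_nonneg P hP i k i) (fun k => ?_)
      (fun N => surv_sum P hP pivec hpi hpisum hst i N)
    have h1 := F_nonneg P hP (F P) hFP i k i
    rw [surv_F P hP1 (F P) hFP i k i] at h1
    simpa using h1
  · have hall : ∀ j, j = i := by
      intro j
      by_contra hj
      have h2 : pivec i + pivec j ≤ ∑ l, pivec l := by
        rw [← Finset.sum_pair (Ne.symm hj)]
        exact Finset.sum_le_sum_of_subset_of_nonneg (Finset.subset_univ _)
          (fun l _ _ => (hpi l).le)
      linarith [hpi j]
    have hz : ∀ k : ℕ, Real.negMulLog (F P (k + 1) i i) = 0 := by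
      intro k
      rcases k with _ | k
      · have h3 := hP1 i
        rw [Finset.sum_eq_single i (fun j _ hj => absurd (hall j) hj) (by simp)] at h3
        simp [hFP.1, h3]
      · rw [hFP.2 (k + 1 + 1) (by omega) i i]
        simp [hall]
    simp [hz, heq]
end

section
/- Let G be the complete directed graph on n ≥ 2 nodes (all edges present, including self-loops) with unitary travel times, let π > 0 be a probability vector, and set P = 𝟙_n π^T. Then π^T P = π^T, P𝟙_n = 𝟙_n, and the first return probabilities satisfy F_k(i,i) = π_i (1 − π_i)^{k−1} for every state i and every k ∈ ℤ_{>0} (i.e., T_{ii} is geometric with parameter π_i); consequently J(P) = −Σ_{i=1}^n ( π_i log π_i + (1 − π_i) log(1 − π_i) ), so P = 𝟙_n π^T attains the maximum of the return time entropy over Markov chains with stationary distribution π on the complete graph. -/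
open scoped BigOperators
open Real

lemma aux_ite_sum {n : ℕ} (a : Fin n → ℝ) (j : Fin n) :
    (∑ h, if h = j then 0 else a h) = (∑ h, a h) - a j := by
  have : ∀ h, (if h = j then 0 else a h) = a h - (if h = j then a h else 0) := by
    intro h; split_ifs <;> simp
  simp [this, Finset.sum_sub_distrib]

lemma aux_geom (p : ℝ) (h0 : 0 < p) (h1 : p < 1) :
    HasSum (fun k : ℕ => Real.negMulLog (p * (1 - p) ^ k))
      (-Real.log p - Real.log (1 - p) * (1 / p - 1)) := by
  have hr0 : 0 < 1 - p := by linarith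
  have hr1 : 1 - p < 1 := by linarith
  have e1 := (hasSum_geometric_of_lt_one hr0.le hr1).mul_left (-(p * Real.log p))
  have e2 := (hasSum_coe_mul_geometric_of_norm_lt_one (𝕜 := ℝ) (r := 1 - p)
    (by rw [Real.norm_eq_abs, abs_of_pos hr0]; exact hr1)).mul_left (-(p * Real.log (1 - p)))
  have hs := e1.add e2
  have A : (fun k : ℕ => Real.negMulLog (p * (1 - p) ^ k)) = fun k : ℕ =>
      -(p * Real.log p) * (1 - p) ^ k + -(p * Real.log (1 - p)) * ((k : ℝ) * (1 - p) ^ k) := by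
    funext k
    rw [Real.negMulLog_def]
    simp only []
    rw [Real.log_mul h0.ne' (pow_pos hr0 k).ne', Real.log_pow]
    ring
  have B : -Real.log p - Real.log (1 - p) * (1 / p - 1) =
      -(p * Real.log p) * (1 - (1 - p))⁻¹ +
        -(p * Real.log (1 - p)) * ((1 - p) / (1 - (1 - p)) ^ 2) := by
    rw [sub_sub_cancel]
    field_simp
    ring
  rw [A, B]
  exact hs

lemma aux_gibbs (f g : ℝ) (hf : 0 ≤ f) (hg : 0 < g) :
    Real.negMulLog f ≤ -(f * Real.log g) + g - f := by
  rcases hf.eq_or_lt with rfl | hf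
  · simp [hg.le]
  · have h := Real.log_le_sub_one_of_pos (div_pos hg hf)
    rw [Real.log_div hg.ne' hf.ne'] at h
    have h2 := mul_le_mul_of_nonneg_left h hf.le
    have h3 : f * (g / f - 1) = g - f := by field_simp
    rw [h3] at h2
    rw [Real.negMulLog]
    linarith

lemma aux_max (p : ℝ) (h0 : 0 < p) (h1 : p < 1) (G : ℕ → ℝ) (hG0 : G 0 = 1)
    (hG : ∀ k, 0 ≤ G k) (hmono : ∀ k, G (k + 1) ≤ G k)
    (hsum : ∀ K, ∑ k ∈ Finset.range K, G k ≤ 1 / p) :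
    ∑' k : ℕ, Real.negMulLog (G k - G (k + 1)) ≤
      -Real.log p - Real.log (1 - p) * (1 / p - 1) := by
  have hr0 : 0 < 1 - p := by linarith
  have hlr : Real.log (1 - p) < 0 := Real.log_neg hr0 (by linarith)
  have hlp : Real.log p < 0 := Real.log_neg h0 h1
  have hS : Summable G := summable_of_sum_range_le hG hsum
  have hlim := hS.tendsto_atTop_zero
  have hf : HasSum (fun k => G k - G (k + 1)) 1 := by
    rw [hasSum_iff_tendsto_nat_of_nonneg (fun k => by linarith [hmono k])]
    simp only [Finset.sum_range_sub']
    rw [hG0]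
    simpa using hlim.const_sub 1
  have hparts : ∀ K : ℕ, ∑ k ∈ Finset.range K, (k : ℝ) * (G k - G (k + 1)) =
      ∑ k ∈ Finset.range (K + 1), G k - 1 - K * G K := by
    intro K
    induction K with
    | zero => simp [hG0]
    | succ K ih =>
      rw [Finset.sum_range_succ, ih, Finset.sum_range_succ _ (K + 1)]
      push_cast
      ring
  have hnn : ∀ k : ℕ, 0 ≤ (k : ℝ) * (G k - G (k + 1)) := fun k =>
    mul_nonneg (Nat.cast_nonneg k) (by linarith [hmono k])
  have hb : ∀ K : ℕ, ∑ k ∈ Finset.range K, (k : ℝ) * (G k - G (k + 1)) ≤ 1 / p - 1 := by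
    intro K
    rw [hparts]
    have := hsum (K + 1)
    have := mul_nonneg (Nat.cast_nonneg (α := ℝ) K) (hG K)
    linarith
  have hkS : Summable (fun k : ℕ => (k : ℝ) * (G k - G (k + 1))) :=
    summable_of_sum_range_le hnn hb
  have hkb := Real.tsum_le_of_sum_range_le hnn hb
  have hgeo := (hasSum_geometric_of_lt_one hr0.le (by linarith : 1 - p < 1)).mul_left p
  have hg1 : p * (1 - (1 - p))⁻¹ = 1 := by
    rw [sub_sub_cancel]; exact mul_inv_cancel₀ h0.ne'
  rw [hg1] at hgeo
  have hU := (((hf.mul_left (-Real.log p)).add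
    (hkS.hasSum.mul_left (-Real.log (1 - p)))).add hgeo).sub hf
  have hp1 : 1 ≤ 1 / p := by rw [le_div_iff₀ h0]; linarith
  by_cases hN : Summable (fun k : ℕ => Real.negMulLog (G k - G (k + 1)))
  · have := hasSum_le (fun k => ?_) hN.hasSum hU
    · refine this.trans ?_
      have := mul_le_mul_of_nonneg_left hkb (by linarith : 0 ≤ -Real.log (1 - p))
      linarith
    · have := aux_gibbs (G k - G (k + 1)) (p * (1 - p) ^ k) (by linarith [hmono k])
        (mul_pos h0 (pow_pos hr0 k))
      rw [Real.log_mul h0.ne' (pow_pos hr0 k).ne', Real.log_pow] at this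
      refine this.trans (le_of_eq ?_)
      ring
  · rw [tsum_eq_zero_of_not_summable hN]
    have := mul_nonneg (by linarith : 0 ≤ -Real.log (1 - p)) (by linarith : 0 ≤ 1 / p - 1)
    linarith

/-- survival probabilities -/
def auxG {n : ℕ} (Q : Matrix (Fin n) (Fin n) ℝ) (j : Fin n) : ℕ → Fin n → ℝ
  | 0 => fun _ => 1
  | k + 1 => fun i => ∑ h, if h = j then 0 else Q i h * auxG Q j k h

lemma auxG_nonneg {n : ℕ} (Q : Matrix (Fin n) (Fin n) ℝ) (hQ : ∀ i j, 0 ≤ Q i j) (j : Fin n)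
    (k : ℕ) : ∀ i, 0 ≤ auxG Q j k i := by
  induction k with
  | zero => intro i; simp [auxG]
  | succ k ih =>
    intro i
    refine Finset.sum_nonneg fun h _ => ?_
    split_ifs
    · exact le_rfl
    · exact mul_nonneg (hQ _ _) (ih _)

lemma aux_F {n : ℕ} (Q : Matrix (Fin n) (Fin n) ℝ) (hQ1 : ∀ i, ∑ j, Q i j = 1)
    (F : ℕ → Fin n → Fin n → ℝ) (hF : IsHittingProbUnit Q F) (j : Fin n)
    (k : ℕ) : ∀ i, F (k + 1) i j = auxG Q j k i - auxG Q j (k + 1) i := by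
  induction k with
  | zero =>
    intro i
    rw [zero_add, hF.1]
    simp only [auxG]
    rw [aux_ite_sum]
    simp [hQ1]
  | succ k ih =>
    intro i
    rw [hF.2 (k + 1 + 1) (by omega)]
    conv_rhs => rw [auxG, auxG]
    rw [← Finset.sum_sub_distrib]
    refine Finset.sum_congr rfl fun h _ => ?_
    split_ifs
    · simp
    · rw [Nat.add_sub_cancel, ih]; ring

lemma aux_F_nonneg {n : ℕ} (Q : Matrix (Fin n) (Fin n) ℝ) (hQ : ∀ i j, 0 ≤ Q i j)
    (F : ℕ → Fin n → Fin n → ℝ) (hF : IsHittingProbUnit Q F) (j : Fin n)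
    (k : ℕ) : ∀ i, 0 ≤ F (k + 1) i j := by
  induction k with
  | zero => intro i; rw [zero_add, hF.1]; exact hQ _ _
  | succ k ih =>
    intro i
    rw [hF.2 (k + 1 + 1) (by omega)]
    refine Finset.sum_nonneg fun h _ => ?_
    split_ifs
    · exact le_rfl
    · exact mul_nonneg (hQ _ _) (ih _)

lemma aux_kac {n : ℕ} (p : Fin n → ℝ) (hpsum : ∑ i, p i = 1)
    (Q : Matrix (Fin n) (Fin n) ℝ)
    (hst : ∀ j, ∑ i, p i * Q i j = p j) (j : Fin n) (K : ℕ) :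
    p j * ∑ k ∈ Finset.range K, auxG Q j k j = 1 - ∑ h, p h * auxG Q j K h := by
  induction K with
  | zero => simp [auxG, hpsum]
  | succ K ih =>
    rw [Finset.sum_range_succ, mul_add, ih]
    have : ∑ h, p h * auxG Q j (K + 1) h = ∑ l, p l * auxG Q j K l - p j * auxG Q j K j := by
      simp only [auxG, aux_ite_sum, mul_sub, Finset.sum_sub_distrib, Finset.mul_sum]
      rw [Finset.sum_comm]
      congr 1
      · refine Finset.sum_congr rfl fun l _ => ?_
        rw [← hst l, Finset.sum_mul]
        exact Finset.sum_congr rfl fun i _ => by ring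
      · rw [← hst j, Finset.sum_mul]
        exact Finset.sum_congr rfl fun i _ => by ring
    rw [this]; ring

/-- on the complete directed graph (with self-loops) and unitary
travel times, the chain `P = 𝟙 πᵀ` (i.e. `P i j = π j`) has `π` as stationary
distribution, is row-stochastic, its first return times are geometric:
`F_k(i,i) = π_i (1−π_i)^{k−1}`, its return time entropy equals
`−Σ_i (π_i log π_i + (1−π_i) log(1−π_i))`, and it maximizes the return time
entropy among all Markov chains on the complete graph with stationary
distribution `π`. -/
theorem complete_graph_optimal_chain {n : ℕ} (hn : 2 ≤ n)
    (pivec : Fin n → ℝ) (hpi : ∀ i, 0 < pivec i) (hpisum : ∑ i, pivec i = 1)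
    (P : Matrix (Fin n) (Fin n) ℝ) (hP : ∀ i j, P i j = pivec j)
    (F : ℕ → Fin n → Fin n → ℝ) (hF : IsHittingProbUnit P F) :
    (∀ j, ∑ i, pivec i * P i j = pivec j) ∧
    (∀ i, ∑ j, P i j = 1) ∧
    (∀ i : Fin n, ∀ k : ℕ, 1 ≤ k → F k i i = pivec i * (1 - pivec i) ^ (k - 1)) ∧
    (∑ i : Fin n, pivec i * ∑' k : ℕ, Real.negMulLog (F (k + 1) i i)) =
      -∑ i : Fin n,
        (pivec i * Real.log (pivec i) + (1 - pivec i) * Real.log (1 - pivec i)) ∧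
    (∀ Q : Matrix (Fin n) (Fin n) ℝ, (∀ i j, 0 ≤ Q i j) → (∀ i, ∑ j, Q i j = 1) →
      (∀ j, ∑ i, pivec i * Q i j = pivec j) →
      ∀ F' : ℕ → Fin n → Fin n → ℝ, IsHittingProbUnit Q F' →
        (∑ i : Fin n, pivec i * ∑' k : ℕ, Real.negMulLog (F' (k + 1) i i)) ≤
          ∑ i : Fin n, pivec i * ∑' k : ℕ, Real.negMulLog (F (k + 1) i i)) := by
  have hlt : ∀ i, pivec i < 1 := by
    intro i
    have : Nontrivial (Fin n) := Fin.nontrivial_iff_two_le.mpr hn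
    obtain ⟨j, hj⟩ := exists_ne i
    rw [← hpisum]
    exact Finset.single_lt_sum hj (Finset.mem_univ i) (Finset.mem_univ j) (hpi j)
      (fun k _ _ => (hpi k).le)
  have hFk : ∀ (k : ℕ) (h i : Fin n), F (k + 1) h i = pivec i * (1 - pivec i) ^ k := by
    intro k
    induction k with
    | zero => intro h i; rw [zero_add, hF.1, hP]; simp
    | succ k ih =>
      intro h i
      rw [hF.2 (k + 1 + 1) (by omega), aux_ite_sum]
      simp only [Nat.add_sub_cancel, ih, hP]
      rw [← Finset.sum_mul, hpisum]
      ring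
  have hH : ∀ i, ∑' k : ℕ, Real.negMulLog (F (k + 1) i i) =
      -Real.log (pivec i) - Real.log (1 - pivec i) * (1 / pivec i - 1) := by
    intro i
    simp only [hFk]
    exact (aux_geom _ (hpi i) (hlt i)).tsum_eq
  refine ⟨?_, ?_, ?_, ?_, ?_⟩
  · intro j
    simp only [hP]
    rw [← Finset.sum_mul, hpisum, one_mul]
  · intro i
    simp only [hP, hpisum]
  · intro i k hk
    obtain ⟨m, rfl⟩ := Nat.exists_eq_add_of_le' hk
    rw [hFk, Nat.add_sub_cancel]
  · rw [← Finset.sum_neg_distrib]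
    refine Finset.sum_congr rfl fun i _ => ?_
    rw [hH]
    have := (hpi i).ne'
    field_simp
    ring
  · intro Q hQ hQ1 hst F' hF'
    refine Finset.sum_le_sum fun i _ => mul_le_mul_of_nonneg_left ?_ (hpi i).le
    rw [hH]
    have e : ∀ k, F' (k + 1) i i = auxG Q i k i - auxG Q i (k + 1) i :=
      fun k => aux_F Q hQ1 F' hF' i k i
    simp only [e]
    refine aux_max (pivec i) (hpi i) (hlt i) (fun k => auxG Q i k i) rfl
      (fun k => auxG_nonneg Q hQ i k i) (fun k => ?_) (fun K => ?_)
    · have := aux_F_nonneg Q hQ F' hF' i k i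
      rw [e] at this
      linarith
    · rw [le_div_iff₀ (hpi i), mul_comm, aux_kac pivec hpisum Q hst i K]
      have : 0 ≤ ∑ h, pivec h * auxG Q i K h :=
        Finset.sum_nonneg fun h _ => mul_nonneg (hpi h).le (auxG_nonneg Q hQ i K h)
      linarith
end

section
/- Let G be a strongly connected directed graph with n nodes and unitary travel times, π > 0 a stationary distribution, and ε > 0 such that P^ε_{G,π} is nonempty. Then for P ∈ P^ε_{G,π}, J(P) ≥ H_rate(P), and equality J(P) = H_rate(P) holds if and only if P is a permutation matrix (in which case both sides equal 0). -/
open scoped BigOperators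
open Real

/-- The entropy rate `H_rate(P) = −Σ_i π_i Σ_j p_{ij} log p_{ij}`. -/
noncomputable def entropyRate {n : ℕ} (pivec : Fin n → ℝ)
    (P : Matrix (Fin n) (Fin n) ℝ) : ℝ :=
  ∑ i : Fin n, pivec i * ∑ j : Fin n, Real.negMulLog (P i j)

/-- Taboo distribution: start at `i`, kill upon return to `i`. -/
noncomputable def tab {n : ℕ} (P : Matrix (Fin n) (Fin n) ℝ) (i : Fin n) : ℕ → Fin n → ℝ
  | 0 => fun x => if x = i then 1 else 0
  | (a + 1) => fun x => if x = i then 0 else ∑ y, tab P i a y * P y x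

theorem jens {n : ℕ} (m q : Fin n → ℝ) (hm : ∀ x, 0 ≤ m x) (hq : ∀ x, 0 ≤ q x) :
    ∑ x, m x * Real.negMulLog (q x) ≤
      Real.negMulLog (∑ x, m x * q x) + (∑ x, m x * q x) * Real.log (∑ x, m x) := by
  rcases (Finset.sum_nonneg (fun x _ => hm x) : 0 ≤ ∑ x, m x).eq_or_lt with h0 | hM
  · have hz : ∀ x, m x = 0 := fun x =>
      (Finset.sum_eq_zero_iff_of_nonneg (fun x _ => hm x)).1 h0.symm x (Finset.mem_univ x)
    simp [hz]
  · set M := ∑ x, m x with hMd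
    have key := Real.concaveOn_negMulLog.le_map_sum (t := Finset.univ) (w := fun x => m x / M)
      (p := q) (fun x _ => div_nonneg (hm x) hM.le)
      (by rw [← Finset.sum_div, ← hMd, div_self hM.ne']) (fun x _ => hq x)
    simp only [smul_eq_mul, div_mul_eq_mul_div, ← Finset.sum_div] at key
    rw [div_le_iff₀ hM] at key
    refine key.trans (le_of_eq ?_)
    set f := ∑ x, m x * q x
    rcases eq_or_ne f 0 with hf | hf
    · simp [hf]
    · simp only [Real.negMulLog]
      rw [Real.log_div hf hM.ne']
      field_simp
      ring

theorem jens2 {n : ℕ} (m q : Fin n → ℝ) (hm : ∀ x, 0 ≤ m x) (hq : ∀ x, 0 ≤ q x)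
    (hq1 : ∀ x, q x ≤ 1) :
    ∑ x, m x * (Real.negMulLog (q x) + Real.negMulLog (1 - q x)) ≤
      Real.negMulLog (∑ x, m x * q x) + Real.negMulLog (∑ x, m x - ∑ x, m x * q x)
        - Real.negMulLog (∑ x, m x) := by
  have h1 := jens m q hm hq
  have h2 := jens m (fun x => 1 - q x) hm (fun x => sub_nonneg.2 (hq1 x))
  have e : ∑ x, m x * (1 - q x) = ∑ x, m x - ∑ x, m x * q x := by
    rw [← Finset.sum_sub_distrib]; exact Finset.sum_congr rfl fun x _ => by ring
  simp only [e] at h2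
  simp only [mul_add, Finset.sum_add_distrib]
  have : Real.negMulLog (∑ x, m x) = -(∑ x, m x) * Real.log (∑ x, m x) := rfl
  rw [this]
  linarith

theorem nml_le (f : ℝ) (hf : 0 ≤ f) (k : ℕ) :
    Real.negMulLog f ≤ k * f + Real.exp (-1) ^ (k + 1) := by
  rcases hf.eq_or_lt with h | h
  · subst h; simp; positivity
  · have h1 := Real.add_one_le_exp (-Real.log f - k - 1)
    have h2 : Real.exp (-1) ^ (k + 1) = f * Real.exp (-Real.log f - k - 1) := by
      rw [← Real.exp_nat_mul]
      have h3 : f * Real.exp (-Real.log f - k - 1)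
          = Real.exp (Real.log f) * Real.exp (-Real.log f - k - 1) := by rw [Real.exp_log h]
      rw [h3, ← Real.exp_add]
      congr 1; push_cast; ring
    rw [h2, Real.negMulLog]
    nlinarith

section
variable {n : ℕ} {Adj : Fin n → Fin n → Prop} {w : Fin n → ℝ} {ε : ℝ}
  {P : Matrix (Fin n) (Fin n) ℝ}

theorem P_nonneg (hε : 0 < ε) (hP : P ∈ Conf Adj w ε) (i j : Fin n) : 0 ≤ P i j := by
  by_cases h : Adj i j
  · exact hε.le.trans (hP.1 i j h)
  · exact (hP.2.1 i j h).ge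

theorem P_le_one (hε : 0 < ε) (hP : P ∈ Conf Adj w ε) (i j : Fin n) : P i j ≤ 1 := by
  rw [← hP.2.2.1 i]
  exact Finset.single_le_sum (f := fun j => P i j) (fun j _ => P_nonneg hε hP i j)
    (Finset.mem_univ j)

theorem tab_nonneg (h : ∀ i j, 0 ≤ P i j) (i : Fin n) (a : ℕ) : ∀ x, 0 ≤ tab P i a x := by
  induction a with
  | zero => intro x; simp only [tab]; split_ifs <;> norm_num
  | succ a ih =>
    intro x; simp only [tab]; split_ifs
    · exact le_rfl
    · exact Finset.sum_nonneg fun y _ => mul_nonneg (ih y) (h y x)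

theorem tab_F {F : ℕ → Fin n → Fin n → ℝ} (hF : IsHittingProbUnit P F) (i : Fin n) (a : ℕ) :
    F (a + 1) i i = ∑ x, tab P i a x * P x i := by
  have key : ∀ a k, ∑ x, tab P i a x * F (k + 2) x i = ∑ x, tab P i (a + 1) x * F (k + 1) x i := by
    intro a k
    have : ∀ x, F (k + 2) x i = ∑ h, if h = i then 0 else P x h * F (k + 1) h i :=
      fun x => hF.2 (k + 2) (by omega) x i
    simp only [this, Finset.mul_sum]
    rw [Finset.sum_comm]
    refine Finset.sum_congr rfl fun h _ => ?_
    simp only [tab]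
    split_ifs
    · simp
    · rw [Finset.sum_mul]; exact Finset.sum_congr rfl fun y _ => by ring
  have key2 : ∀ a k, ∑ x, tab P i 0 x * F (k + a + 1) x i = ∑ x, tab P i a x * F (k + 1) x i := by
    intro a
    induction a with
    | zero => intro k; rfl
    | succ a ih =>
      intro k
      rw [← key a k, ← ih (k + 1)]
      exact Finset.sum_congr rfl fun x _ => by rw [show k + (a + 1) + 1 = k + 1 + a + 1 by ring]
  have := key2 a 0
  simp only [zero_add, hF.1] at this
  rw [← this]
  simp [tab]

theorem tab_surv (hrow : ∀ i, ∑ j, P i j = 1) (i : Fin n) (a : ℕ) :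
    ∑ x, tab P i (a + 1) x = ∑ x, tab P i a x - ∑ x, tab P i a x * P x i := by
  have h1 : ∑ x, ∑ y, tab P i a y * P y x = ∑ y, tab P i a y := by
    rw [Finset.sum_comm]
    simp only [← Finset.mul_sum, hrow, mul_one]
  rw [← h1, eq_sub_iff_add_eq]
  have h2 : ∑ x, tab P i a x * P x i = ∑ x, if x = i then ∑ y, tab P i a y * P y x else 0 := by
    simp
  rw [h2, ← Finset.sum_add_distrib]
  refine Finset.sum_congr rfl fun x _ => ?_
  simp only [tab]
  split_ifs <;> simp

theorem tab_partial_succ (i : Fin n) (N : ℕ) (x : Fin n) :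
    ∑ a ∈ Finset.range (N + 1), tab P i a x =
      if x = i then 1 else ∑ y, (∑ a ∈ Finset.range N, tab P i a y) * P y x := by
  rw [Finset.sum_range_succ']
  simp only [tab]
  split_ifs
  · simp
  · simp only [Finset.sum_mul, add_zero]
    rw [Finset.sum_comm]

theorem tab_partial_le (hw : ∀ i, 0 < w i) (h : ∀ i j, 0 ≤ P i j)
    (hst : ∀ j, ∑ i, w i * P i j = w j) (i : Fin n) (N : ℕ) :
    ∀ x, ∑ a ∈ Finset.range N, tab P i a x ≤ w x / w i := by
  induction N with
  | zero => intro x; simpa using (div_pos (hw x) (hw i)).le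
  | succ N ih =>
    intro x
    rw [tab_partial_succ]
    split_ifs with hx
    · rw [hx, div_self (hw i).ne']
    · calc _ ≤ ∑ y, (w y / w i) * P y x :=
            Finset.sum_le_sum fun y _ => mul_le_mul_of_nonneg_right (ih y) (h y x)
        _ = w x / w i := by
            rw [← hst x, Finset.sum_div]
            exact Finset.sum_congr rfl fun y _ => by ring

theorem tab_hasSum (hconn : ∀ i j, Relation.ReflTransGen Adj i j) (hε : 0 < ε)
    (hw : ∀ i, 0 < w i) (hP : P ∈ Conf Adj w ε) (i : Fin n) (x : Fin n) :
    HasSum (fun a => tab P i a x) (w x / w i) := by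
  have hp := P_nonneg hε hP
  have hs : ∀ x, Summable fun a => tab P i a x := fun x =>
    summable_of_sum_range_le (fun a => tab_nonneg hp i a x)
      (fun N => tab_partial_le hw hp hP.2.2.2 i N x)
  set ν : Fin n → ℝ := fun x => ∑' a, tab P i a x with hν
  have hle : ∀ x, ν x ≤ w x / w i := fun x =>
    Real.tsum_le_of_sum_range_le (fun a => tab_nonneg hp i a x)
      (fun N => tab_partial_le hw hp hP.2.2.2 i N x)
  have ht : ∀ x, Filter.Tendsto (fun N => ∑ a ∈ Finset.range N, tab P i a x) Filter.atTop
      (nhds (ν x)) := fun x => (hs x).hasSum.tendsto_sum_nat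
  have hrec : ∀ x, ν x = if x = i then 1 else ∑ y, ν y * P y x := by
    intro x
    have h1 := (ht x).comp (Filter.tendsto_add_atTop_nat 1)
    refine tendsto_nhds_unique h1 ?_
    simp only [Function.comp_def, tab_partial_succ]
    split_ifs
    · exact tendsto_const_nhds
    · exact tendsto_finsetSum _ fun y _ => (ht y).mul_const _
  set d : Fin n → ℝ := fun x => w x / w i - ν x with hd
  have hd0 : ∀ x, 0 ≤ d x := fun x => sub_nonneg.2 (hle x)
  have hwP : ∀ x, ∑ y, (w y / w i) * P y x = w x / w i := fun x => by
    rw [← hP.2.2.2 x, Finset.sum_div]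
    exact Finset.sum_congr rfl fun y _ => by ring
  have hdi : d i = 0 := by
    simp only [hd]; rw [hrec i]; simp [(hw i).ne']
  have hdx : ∀ x, x ≠ i → ∑ y, d y * P y x = d x := by
    intro x hx
    simp only [hd, sub_mul, Finset.sum_sub_distrib, hwP]
    rw [hrec x, if_neg hx]
  have hsum : ∑ x, ∑ y, d y * P y x = ∑ y, d y := by
    rw [Finset.sum_comm]
    simp only [← Finset.mul_sum, hP.2.2.1, mul_one]
  have hdi' : ∑ y, d y * P y i = d i := by
    rw [← Finset.add_sum_erase _ _ (Finset.mem_univ i),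
      ← Finset.add_sum_erase Finset.univ d (Finset.mem_univ i)] at hsum
    have : ∑ x ∈ Finset.univ.erase i, ∑ y, d y * P y x = ∑ x ∈ Finset.univ.erase i, d x :=
      Finset.sum_congr rfl fun x hx => hdx x (Finset.ne_of_mem_erase hx)
    linarith
  have hall : ∀ x, ∑ y, d y * P y x = d x := fun x => by
    by_cases hx : x = i
    · rw [hx, hdi']
    · exact hdx x hx
  have hz : ∀ x, d x = 0 := by
    intro x
    have hc := hconn x i
    induction hc using Relation.ReflTransGen.head_induction_on with
    | refl => exact hdi
    | head hab _ ih =>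
      rename_i a b _
      have h2 := hall b
      rw [ih] at h2
      have h3 := (Finset.sum_eq_zero_iff_of_nonneg
        (fun y _ => mul_nonneg (hd0 y) (hp y b))).1 h2 a (Finset.mem_univ a)
      exact (mul_eq_zero.1 h3).resolve_right (hε.trans_le (hP.1 a b hab)).ne'
  have := (hs x).hasSum
  have e := hz x
  simp only [hd, sub_eq_zero] at e
  rw [e]
  exact this

theorem main_ineq (hconn : ∀ i j, Relation.ReflTransGen Adj i j) (hε : 0 < ε)
    (hw : ∀ i, 0 < w i) (hP : P ∈ Conf Adj w ε) {F : ℕ → Fin n → Fin n → ℝ}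
    (hF : IsHittingProbUnit P F) (i : Fin n) :
    ∑ x, w x * (Real.negMulLog (P x i) + Real.negMulLog (1 - P x i)) ≤
      w i * ∑' k : ℕ, Real.negMulLog (F (k + 1) i i) := by
  have hp := P_nonneg hε hP
  have hp1 := P_le_one hε hP
  have hts := tab_hasSum hconn hε hw hP i
  set S : ℕ → ℝ := fun a => ∑ x, tab P i a x with hS
  set f : ℕ → ℝ := fun a => F (a + 1) i i with hf
  have hfe : ∀ a, f a = ∑ x, tab P i a x * P x i := tab_F hF i
  have hSf : ∀ a, S (a + 1) = S a - f a := fun a => by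
    rw [hfe]; exact tab_surv hP.2.2.1 i a
  have hS0 : S 0 = 1 := by simp [hS, tab]
  have hSnn : ∀ a, 0 ≤ S a := fun a => Finset.sum_nonneg fun x _ => tab_nonneg hp i a x
  have hfnn : ∀ a, 0 ≤ f a := fun a => by
    rw [hfe]; exact Finset.sum_nonneg fun x _ => mul_nonneg (tab_nonneg hp i a x) (hp x i)
  have hS1 : ∀ a, S a ≤ 1 := by
    intro a
    induction a with
    | zero => exact hS0.le
    | succ a ih => rw [hSf]; linarith [hfnn a]
  have hf1 : ∀ a, f a ≤ 1 := fun a => by linarith [hSf a, hS1 a, hSnn (a + 1)]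
  have hSs : Summable S := (hasSum_sum fun x _ => hts x).summable
  have hkf : ∀ N, ∑ a ∈ Finset.range N, (a : ℝ) * f a + N * S N
      = ∑ a ∈ Finset.range N, S (a + 1) := by
    intro N
    induction N with
    | zero => simp
    | succ N ih =>
      rw [Finset.sum_range_succ, Finset.sum_range_succ, ← ih]
      push_cast
      have := hSf N
      rw [show f N = S N - S (N + 1) by linarith]
      ring
  have hSs1 : Summable fun a => S (a + 1) := (summable_nat_add_iff 1).2 hSs
  have hkfs : Summable fun a : ℕ => (a : ℝ) * f a := by
    refine summable_of_sum_range_le (c := ∑' a, S (a + 1))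
      (fun a => mul_nonneg a.cast_nonneg (hfnn a)) fun N => ?_
    have h1 := hSs1.sum_le_tsum (Finset.range N) (fun a _ => hSnn (a + 1))
    have h2 : 0 ≤ (N : ℝ) * S N := mul_nonneg N.cast_nonneg (hSnn N)
    linarith [hkf N]
  have hgeo : Summable fun k : ℕ => Real.exp (-1) ^ (k + 1) :=
    (summable_nat_add_iff 1).2
      (summable_geometric_of_lt_one (Real.exp_pos _).le (Real.exp_lt_one_iff.2 (by norm_num)))
  have hsη : Summable fun a => Real.negMulLog (f a) :=
    Summable.of_nonneg_of_le (fun a => Real.negMulLog_nonneg (hfnn a) (hf1 a))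
      (fun a => nml_le (f a) (hfnn a) a) (hkfs.add hgeo)
  set g : Fin n → ℝ := fun x => Real.negMulLog (P x i) + Real.negMulLog (1 - P x i) with hg
  have hstep : ∀ N, ∑ x, (∑ a ∈ Finset.range N, tab P i a x) * g x ≤
      ∑ a ∈ Finset.range N, Real.negMulLog (f a) + Real.negMulLog (S N) := by
    intro N
    induction N with
    | zero => simp [hS0]
    | succ N ih =>
      have h := jens2 (tab P i N) (fun x => P x i) (tab_nonneg hp i N) (fun x => hp x i)
        (fun x => hp1 x i)
      rw [← hfe N] at h
      change ∑ x, tab P i N x * g x ≤ _ + Real.negMulLog (S N - f N) - Real.negMulLog (S N) at h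
      rw [← hSf N] at h
      simp only [Finset.sum_range_succ, add_mul, Finset.sum_add_distrib]
      linarith
  have hl : Filter.Tendsto (fun N => ∑ x, (∑ a ∈ Finset.range N, tab P i a x) * g x) Filter.atTop
      (nhds (∑ x, w x / w i * g x)) :=
    tendsto_finsetSum _ fun x _ => (hts x).tendsto_sum_nat.mul_const _
  have hr : Filter.Tendsto (fun N => ∑ a ∈ Finset.range N, Real.negMulLog (f a)
      + Real.negMulLog (S N)) Filter.atTop (nhds (∑' a, Real.negMulLog (f a) + 0)) := by
    refine hsη.hasSum.tendsto_sum_nat.add ?_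
    have := (Real.continuous_negMulLog.tendsto 0).comp hSs.tendsto_atTop_zero
    simpa [Function.comp_def] using this
  have hfin := le_of_tendsto_of_tendsto' hl hr hstep
  rw [add_zero] at hfin
  have h3 := mul_le_mul_of_nonneg_left hfin (hw i).le
  refine le_trans (le_of_eq ?_) h3
  rw [Finset.mul_sum]
  refine Finset.sum_congr rfl fun x _ => ?_
  have := (hw i).ne'
  field_simp
  rfl

end

/-- for unitary travel times, `J(P) ≥ H_rate(P)` on the
`ε`-conforming set, with equality if and only if `P` is a permutation matrix,
in which case both sides equal `0`. -/
theorem return_time_entropy_lower_bound {n : ℕ}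
    (Adj : Fin n → Fin n → Prop) (pivec : Fin n → ℝ) (ε : ℝ)
    (hconn : ∀ i j, Relation.ReflTransGen Adj i j)
    (hpi : ∀ i, 0 < pivec i) (hpisum : ∑ i, pivec i = 1)
    (hε : 0 < ε) (hne : (Conf Adj pivec ε).Nonempty)
    (F : Matrix (Fin n) (Fin n) ℝ → ℕ → Fin n → Fin n → ℝ)
    (hF : ∀ P ∈ Conf Adj pivec ε, IsHittingProbUnit P (F P)) :
    ∀ P ∈ Conf Adj pivec ε,
      entropyRate pivec P ≤
          (∑ i : Fin n, pivec i * ∑' k : ℕ, Real.negMulLog (F P (k + 1) i i)) ∧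
      ((∑ i : Fin n, pivec i * ∑' k : ℕ, Real.negMulLog (F P (k + 1) i i)) =
          entropyRate pivec P ↔
        ∃ σ : Equiv.Perm (Fin n), ∀ i j, P i j = if σ i = j then 1 else 0) ∧
      ((∃ σ : Equiv.Perm (Fin n), ∀ i j, P i j = if σ i = j then 1 else 0) →
        (∑ i : Fin n, pivec i * ∑' k : ℕ, Real.negMulLog (F P (k + 1) i i)) = 0 ∧
          entropyRate pivec P = 0) := by
  intro P hP
  have hp := P_nonneg hε hP
  have hp1 := P_le_one hε hP
  have hperm : (∃ σ : Equiv.Perm (Fin n), ∀ i j, P i j = if σ i = j then 1 else 0) →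
        (∑ i : Fin n, pivec i * ∑' k : ℕ, Real.negMulLog (F P (k + 1) i i)) = 0 ∧
          entropyRate pivec P = 0 := by
    rintro ⟨σ, hσ⟩
    constructor
    · have h01 : ∀ k i j, F P (k + 1) i j = 0 ∨ F P (k + 1) i j = 1 := by
        intro k
        induction k with
        | zero =>
          intro i j
          rw [zero_add, (hF P hP).1, hσ]
          split_ifs <;> simp
        | succ k ih =>
          intro i j
          rw [(hF P hP).2 (k + 1 + 1) (by omega)]
          have : ∀ h, (if h = j then 0 else P i h * F P (k + 1 + 1 - 1) h j) =
              if σ i = h then (if h = j then 0 else F P (k + 1) h j) else 0 := by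
            intro h
            rw [hσ]
            simp only [Nat.add_sub_cancel]
            split_ifs <;> simp
          simp only [this, Finset.sum_ite_eq, Finset.mem_univ, if_true]
          split_ifs
          · simp
          · exact ih _ _
      refine Finset.sum_eq_zero fun i _ => ?_
      have : ∀ k, Real.negMulLog (F P (k + 1) i i) = 0 := fun k => by
        rcases h01 k i i with h | h <;> simp [h]
      simp [this]
    · unfold entropyRate
      refine Finset.sum_eq_zero fun i _ => ?_
      rw [Finset.sum_eq_zero, mul_zero]
      intro j _
      rw [hσ]
      split_ifs <;> simp
  have hmain : entropyRate pivec P + ∑ x, ∑ i, pivec x * Real.negMulLog (1 - P x i) ≤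
      ∑ i : Fin n, pivec i * ∑' k : ℕ, Real.negMulLog (F P (k + 1) i i) := by
    refine le_trans (le_of_eq ?_) (Finset.sum_le_sum fun i _ =>
      main_ineq hconn hε hpi hP (hF P hP) i)
    symm
    rw [Finset.sum_comm]
    symm
    unfold entropyRate
    rw [← Finset.sum_add_distrib]
    refine Finset.sum_congr rfl fun x _ => ?_
    rw [Finset.mul_sum, ← Finset.sum_add_distrib]
    exact Finset.sum_congr rfl fun i _ => by ring
  have hnn : ∀ x i, 0 ≤ pivec x * Real.negMulLog (1 - P x i) := fun x i =>
    mul_nonneg (hpi x).le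
      (Real.negMulLog_nonneg (by linarith [hp1 x i]) (by linarith [hp x i]))
  have hnn1 : ∀ x, 0 ≤ ∑ i, pivec x * Real.negMulLog (1 - P x i) := fun x =>
    Finset.sum_nonneg fun i _ => hnn x i
  have hnn2 : 0 ≤ ∑ x, ∑ i, pivec x * Real.negMulLog (1 - P x i) :=
    Finset.sum_nonneg fun x _ => hnn1 x
  refine ⟨by linarith, ⟨fun heq => ?_, fun h => ?_⟩, hperm⟩
  · have hz : ∑ x, ∑ i, pivec x * Real.negMulLog (1 - P x i) = 0 := by linarith
    have h01 : ∀ x i, P x i = 0 ∨ P x i = 1 := by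
      intro x i
      have h1 := (Finset.sum_eq_zero_iff_of_nonneg (fun x _ => hnn1 x)).1 hz x (Finset.mem_univ x)
      have h2 := (Finset.sum_eq_zero_iff_of_nonneg (fun i _ => hnn x i)).1 h1 i (Finset.mem_univ i)
      have h3 := (mul_eq_zero.1 h2).resolve_left (hpi x).ne'
      rw [Real.negMulLog, mul_eq_zero, Real.log_eq_zero] at h3
      have := hp x i
      have := hp1 x i
      rcases h3 with h | h | h | h
      · right; linarith
      · right; linarith
      · left; linarith
      · exfalso; linarith
    have hex : ∀ x, ∃ i, P x i = 1 := by
      intro x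
      by_contra! hcon
      have := hP.2.2.1 x
      rw [Finset.sum_eq_zero fun i _ => (h01 x i).resolve_right (hcon i)] at this
      norm_num at this
    choose s hs using hex
    have hP' : ∀ x j, P x j = if s x = j then 1 else 0 := by
      intro x j
      split_ifs with h
      · rw [← h, hs]
      · refine (h01 x j).resolve_right fun h1 => ?_
        have h2 : ∑ k ∈ ({s x, j} : Finset (Fin n)), P x k ≤ ∑ k, P x k :=
          Finset.sum_le_sum_of_subset_of_nonneg (Finset.subset_univ _) fun k _ _ => hp x k
        rw [Finset.sum_pair h, hP.2.2.1 x, hs, h1] at h2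
        norm_num at h2
    have hsurj : Function.Surjective s := by
      intro j
      by_contra! hcon
      have h1 := hP.2.2.2 j
      rw [Finset.sum_eq_zero fun i _ => by rw [hP', if_neg (hcon i), mul_zero]] at h1
      exact (hpi j).ne h1
    exact ⟨Equiv.ofBijective s (Finite.surjective_iff_bijective.1 hsurj), hP'⟩
  · rw [(hperm h).1, (hperm h).2]
end

section
/- Fix a strongly connected directed weighted graph G = (V, E, W) with n nodes, a stationary distribution π > 0, and ε > 0 such that P^ε_{G,π} is nonempty. Then for every P ∈ P^ε_{G,π}, both the truncated and the conditional return time entropy converge to the return time entropy as the truncation accuracy vanishes: lim_{η → 0⁺} J_trunc,η(P) = J(P) and lim_{η → 0⁺} J_cond,η(P) = J(P). -/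
open scoped BigOperators
open Real Filter

lemma aux_shift (T : ℤ → ℝ) (h0 : ∀ m, 0 ≤ T m) (h1 : ∀ m, m < 0 → T m ≤ 1) (K w : ℕ) :
    ∑ N ∈ Finset.range K, T ((N : ℤ) - (w : ℤ)) ≤ w + ∑ N ∈ Finset.range K, T (N : ℤ) := by
  induction w with
  | zero => simp
  | succ w ih =>
    have hA : ∑ N ∈ Finset.range K, T ((N : ℤ) - ((w + 1 : ℕ) : ℤ))
        ≤ ∑ N ∈ Finset.range (K + 1), T ((N : ℤ) - ((w + 1 : ℕ) : ℤ)) := by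
      rw [Finset.sum_range_succ]
      linarith [h0 ((K : ℤ) - ((w + 1 : ℕ) : ℤ))]
    rw [Finset.sum_range_succ'] at hA
    have hB : T (((0 : ℕ) : ℤ) - ((w + 1 : ℕ) : ℤ)) ≤ 1 := h1 _ (by push_cast; omega)
    have hC : ∀ N : ℕ, (((N + 1 : ℕ) : ℤ) - ((w + 1 : ℕ) : ℤ)) = (N : ℤ) - (w : ℤ) := by
      intro N; push_cast; ring
    simp only [hC] at hA
    push_cast at hA hB ⊢
    linarith

lemma aux_negMulLog_le (x : ℝ) (hx : 0 ≤ x) (k : ℕ) :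
    negMulLog x ≤ (k : ℝ) * x + exp (-1) ^ k := by
  rcases hx.eq_or_lt with h | h
  · subst h
    simp; positivity
  · have h2 := Real.log_le_sub_one_of_pos (x := exp (-(k : ℝ)) / x) (by positivity)
    rw [Real.log_div (by positivity) h.ne', Real.log_exp] at h2
    have h3 := mul_le_mul_of_nonneg_left h2 hx
    have h4 : x * (exp (-(k : ℝ)) / x - 1) = exp (-(k : ℝ)) - x := by field_simp
    rw [h4] at h3
    have h5 : exp (-1) ^ k = exp (-(k : ℝ)) := by
      rw [← Real.exp_nat_mul]; congr 1; ring
    rw [h5, negMulLog]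
    nlinarith

lemma aux_entropy (f : ℕ → ℝ) (h0 : ∀ k, 0 ≤ f k) (hs : HasSum f 1)
    (hk : Summable (fun k : ℕ => (k : ℝ) * f k)) :
    Tendsto (fun N => ∑ k ∈ Finset.range N, negMulLog (f k)) atTop
      (nhds (∑' k, negMulLog (f k))) ∧
    Tendsto (fun N => ∑ k ∈ Finset.range N, negMulLog (f k / ∑ k' ∈ Finset.range N, f k')) atTop
      (nhds (∑' k, negMulLog (f k))) := by
  have hle : ∀ k, f k ≤ 1 := fun k => le_hasSum hs k (fun j _ => h0 j)
  have hsum : Summable (fun k => negMulLog (f k)) := by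
    refine Summable.of_nonneg_of_le (fun k => negMulLog_nonneg (h0 k) (hle k))
      (fun k => aux_negMulLog_le (f k) (h0 k) k) (hk.add ?_)
    exact summable_geometric_of_lt_one (exp_pos _).le (by simp)
  have h1 := hsum.hasSum.tendsto_sum_nat
  refine ⟨h1, ?_⟩
  have h2 := hs.tendsto_sum_nat
  have h3 : Tendsto (fun N => (∑ k ∈ Finset.range N, f k)⁻¹) atTop (nhds 1) := by
    simpa using h2.inv₀ one_ne_zero
  have h4 : Tendsto (fun N => negMulLog (∑ k ∈ Finset.range N, f k)⁻¹) atTop (nhds 0) := by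
    have h := (continuous_negMulLog.tendsto 1).comp h3
    rw [negMulLog_one] at h
    exact h
  have h5 := (h3.mul h1).add (h2.mul h4)
  simp only [one_mul, mul_zero, add_zero] at h5
  refine h5.congr (fun N => ?_)
  simp only [div_eq_mul_inv, negMulLog_mul, Finset.sum_add_distrib, Finset.mul_sum, Finset.sum_mul]

lemma aux_tail (f : ℕ → ℝ) (h0 : ∀ k, 0 ≤ f k) (T : ℕ → ℝ)
    (hT : ∀ N, T N = 1 - ∑ k ∈ Finset.range N, f k) (hT0 : ∀ N, 0 ≤ T N)
    (C : ℝ) (hC : ∀ K, ∑ N ∈ Finset.range K, T N ≤ C) :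
    HasSum f 1 ∧ Summable (fun k : ℕ => (k : ℝ) * f k) := by
  have hsT : Summable T := summable_of_sum_range_le hT0 hC
  constructor
  · rw [hasSum_iff_tendsto_nat_of_nonneg h0]
    have := (tendsto_const_nhds (x := (1 : ℝ))).sub hsT.tendsto_atTop_zero
    simp only [sub_zero] at this
    refine this.congr (fun N => ?_)
    rw [hT]; ring
  · have key : ∀ K : ℕ, ∑ k ∈ Finset.range K, (k : ℝ) * f k
        + ∑ k ∈ Finset.range K, f k + K * T K = ∑ N ∈ Finset.range K, T N := by
      intro K
      induction K with
      | zero => simp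
      | succ K ih =>
        have e : T (K + 1) = T K - f K := by rw [hT, hT, Finset.sum_range_succ]; ring
        rw [Finset.sum_range_succ, Finset.sum_range_succ, Finset.sum_range_succ, e, ← ih]
        push_cast; ring
    refine summable_of_sum_range_le (c := C) (fun k => mul_nonneg (by positivity) (h0 k))
      (fun K => ?_)
    have a := key K
    have b := hC K
    have c : 0 ≤ ∑ k ∈ Finset.range K, f k := Finset.sum_nonneg (fun k _ => h0 k)
    have d : 0 ≤ (K : ℝ) * T K := mul_nonneg (by positivity) (hT0 K)
    linarith

lemma aux_chain {n : ℕ} (P : Matrix (Fin n) (Fin n) ℝ) (W : Matrix (Fin n) (Fin n) ℕ)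
    (p : Fin n → ℝ) (hp : ∀ i, 0 < p i) (hP0 : ∀ i j, 0 ≤ P i j)
    (hPW : ∀ i j, P i j = 0 ∨ 1 ≤ W i j) (hrow : ∀ i, ∑ j, P i j = 1)
    (hst : ∀ j, ∑ i, p i * P i j = p j)
    (F : ℤ → Fin n → Fin n → ℝ) (hF : IsHittingProb P W F) (j : Fin n) :
    (∀ k, 0 ≤ F k j j) ∧ HasSum (fun k : ℕ => F ((k : ℤ) + 1) j j) 1 ∧
      Summable (fun k : ℕ => (k : ℝ) * F ((k : ℤ) + 1) j j) := by
  obtain ⟨hF0, hF1⟩ := hF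
  have hnn : ∀ m : ℕ, ∀ k : ℤ, k ≤ m → ∀ i, 0 ≤ F k i j := by
    intro m
    induction m with
    | zero => intro k hk i; rw [hF0 k (by simpa using hk)]
    | succ m ih =>
      intro k hk i
      by_cases hk1 : 1 ≤ k
      · rw [hF1 k hk1]
        refine add_nonneg (by split_ifs <;> simp [hP0]) (Finset.sum_nonneg fun h _ => ?_)
        split_ifs
        · exact le_rfl
        · rcases hPW i h with h0 | h0
          · simp [h0]
          · exact mul_nonneg (hP0 _ _) (ih _ (by push_cast at hk; omega) _)
      · rw [hF0 k (by omega)]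
  have hnn' : ∀ k i, 0 ≤ F k i j := fun k i => hnn k.toNat k (by omega) i
  set T : ℤ → Fin n → ℝ := fun m i => 1 - ∑ k ∈ Finset.range m.toNat, F ((k : ℤ) + 1) i j with hTdef
  have hTneg : ∀ m : ℤ, m ≤ 0 → ∀ i, T m i = 1 := by
    intro m hm i
    simp [hTdef, Int.toNat_of_nonpos hm]
  have hTstep : ∀ m : ℤ, ∀ i, T (m + 1) i = T m i - F (m + 1) i j := by
    intro m i
    by_cases hm : 0 ≤ m
    · have e : (m + 1).toNat = m.toNat + 1 := by omega
      simp only [hTdef, e, Finset.sum_range_succ]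
      rw [Int.toNat_of_nonneg hm]; ring
    · rw [hTneg _ (by omega), hTneg _ (by omega), hF0 _ (by omega)]; ring
  have hrec : ∀ N : ℕ, ∀ i, T N i = (if (N : ℤ) - (W i j : ℤ) < 0 then P i j else 0) +
      ∑ h : Fin n, if h = j then 0 else P i h * T ((N : ℤ) - (W i h : ℤ)) h := by
    intro N i
    induction N with
    | zero =>
      rw [hTneg _ (by simp)]
      have e1 : (if ((0 : ℕ) : ℤ) - (W i j : ℤ) < 0 then P i j else 0) = P i j := by
        rcases hPW i j with h | h
        · simp [h]
        · rw [if_pos (by omega)]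
      have e2 : ∀ h, (if h = j then 0 else P i h * T (((0 : ℕ) : ℤ) - (W i h : ℤ)) h)
          = P i h - if h = j then P i h else 0 := by
        intro h
        rw [hTneg _ (by simp)]
        split_ifs <;> ring
      rw [e1, Finset.sum_congr rfl (fun h _ => e2 h), Finset.sum_sub_distrib, hrow]
      simp
    | succ N ih =>
      push_cast
      rw [hTstep, ih, hF1 _ (by omega)]
      have e1 : (if (N : ℤ) + 1 - (W i j : ℤ) < 0 then P i j else 0) =
          (if (N : ℤ) - (W i j : ℤ) < 0 then P i j else 0)
          - (if (N : ℤ) + 1 = (W i j : ℤ) then P i j else 0) := by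
        split_ifs <;> first | omega | ring
      have e2 : ∀ h, (if h = j then 0 else P i h * T ((N : ℤ) + 1 - (W i h : ℤ)) h)
          = (if h = j then 0 else P i h * T ((N : ℤ) - (W i h : ℤ)) h)
          - (if h = j then 0 else P i h * F ((N : ℤ) + 1 - (W i h : ℤ)) h j) := by
        intro h
        have : (N : ℤ) + 1 - (W i h : ℤ) = (N : ℤ) - (W i h : ℤ) + 1 := by ring
        rw [this, hTstep]
        split_ifs <;> ring
      rw [e1, Finset.sum_congr rfl (fun h _ => e2 h), Finset.sum_sub_distrib]
      ring
  have hTnn : ∀ m : ℕ, ∀ k : ℤ, k ≤ m → ∀ i, 0 ≤ T k i := by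
    intro m
    induction m with
    | zero => intro k hk i; rw [hTneg k (by simpa using hk)]; norm_num
    | succ m ih =>
      intro k hk i
      by_cases hk1 : 1 ≤ k
      · obtain ⟨N, rfl⟩ := Int.eq_ofNat_of_zero_le (show 0 ≤ k by omega)
        rw [hrec N]
        refine add_nonneg (by split_ifs <;> simp [hP0]) (Finset.sum_nonneg fun h _ => ?_)
        split_ifs
        · exact le_rfl
        · rcases hPW i h with h0 | h0
          · simp [h0]
          · exact mul_nonneg (hP0 _ _) (ih _ (by push_cast at hk; omega) _)
      · rw [hTneg k (by omega)]; norm_num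
  have hTnn' : ∀ k i, 0 ≤ T k i := fun k i => hTnn k.toNat k (by omega) i
  set C : ℝ := ∑ i, p i * ∑ h, P i h * W i h with hCdef
  have hbound : ∀ K : ℕ, ∑ N ∈ Finset.range K, T (N : ℤ) j ≤ C / p j := by
    intro K
    set U : Fin n → ℝ := fun i => ∑ N ∈ Finset.range K, T (N : ℤ) i with hU
    have hUi : ∀ i, U i ≤ ∑ h, P i h * W i h + ∑ h, P i h * (if h = j then 0 else U h) := by
      intro i
      have e : U i = P i j * (∑ N ∈ Finset.range K, if (N : ℤ) - (W i j : ℤ) < 0 then (1:ℝ) else 0)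
          + ∑ h, if h = j then 0 else
            P i h * ∑ N ∈ Finset.range K, T ((N : ℤ) - (W i h : ℤ)) h := by
        simp only [hU]
        rw [Finset.sum_congr rfl (fun N _ => hrec N i), Finset.sum_add_distrib, Finset.sum_comm,
          Finset.mul_sum]
        congr 1
        · exact Finset.sum_congr rfl (fun N _ => by split_ifs <;> simp)
        · refine Finset.sum_congr rfl (fun h _ => ?_)
          split_ifs
          · simp
          · rw [Finset.mul_sum]
      have b1 := aux_shift (fun m => if m < 0 then (1:ℝ) else 0)
        (fun m => by split_ifs <;> norm_num)
        (fun m hm => by simp [hm]) K (W i j)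
      have b1' : (∑ N ∈ Finset.range K, if (N : ℤ) - (W i j : ℤ) < 0 then (1:ℝ) else 0)
          ≤ W i j := by
        refine b1.trans ?_
        have : ∀ N : ℕ, ¬ ((N : ℤ) < 0) := fun N => by omega
        simp [this]
      have b2 : ∀ h, ∑ N ∈ Finset.range K, T ((N : ℤ) - (W i h : ℤ)) h ≤ W i h + U h :=
        fun h => aux_shift (fun m => T m h) (fun m => hTnn' m h)
          (fun m hm => (hTneg m hm.le h).le) K (W i h)
      have e3 : P i j * (W i j : ℝ) = ∑ h, if h = j then P i h * (W i h : ℝ) else 0 := by simp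
      rw [e]
      calc _ ≤ P i j * (W i j : ℝ) + ∑ h, (if h = j then 0 else P i h * (W i h + U h)) := by
            refine add_le_add (mul_le_mul_of_nonneg_left b1' (hP0 _ _))
              (Finset.sum_le_sum fun h _ => ?_)
            split_ifs
            · exact le_rfl
            · exact mul_le_mul_of_nonneg_left (b2 h) (hP0 _ _)
        _ = _ := by
            rw [e3, ← Finset.sum_add_distrib, ← Finset.sum_add_distrib]
            refine Finset.sum_congr rfl fun h _ => ?_
            split_ifs <;> ring
    have htot : ∑ i, p i * U i ≤ C + ∑ h, p h * (if h = j then 0 else U h) := by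
      calc ∑ i, p i * U i ≤ ∑ i, p i * (∑ h, P i h * W i h
              + ∑ h, P i h * (if h = j then 0 else U h)) :=
            Finset.sum_le_sum fun i _ => mul_le_mul_of_nonneg_left (hUi i) (hp i).le
        _ = C + ∑ i, ∑ h, p i * (P i h * (if h = j then 0 else U h)) := by
            simp only [mul_add, Finset.sum_add_distrib, hCdef, Finset.mul_sum]
        _ = _ := by
            rw [Finset.sum_comm]
            congr 1
            refine Finset.sum_congr rfl fun h _ => ?_
            rw [← hst h]
            rw [Finset.sum_mul]
            exact Finset.sum_congr rfl fun i _ => by ring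
    have hsub : ∑ i, p i * U i = p j * U j + ∑ h, p h * (if h = j then 0 else U h) := by
      have e3 : p j * U j = ∑ h, if h = j then p h * U h else 0 := by simp
      rw [e3, ← Finset.sum_add_distrib]
      refine Finset.sum_congr rfl fun h _ => ?_
      split_ifs <;> ring
    rw [le_div_iff₀ (hp j)]
    change U j * p j ≤ C
    linarith
  refine ⟨fun k => hnn' k j, ?_⟩
  exact aux_tail (fun k : ℕ => F ((k : ℤ) + 1) j j) (fun k => hnn' _ j) (fun N => T (N : ℤ) j)
    (fun N => by simp [hTdef]) (fun N => hTnn' _ j) (C / p j) hbound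

/-- as the truncation accuracy `η` tends to `0⁺` (with duration
`N_η = ⌈w_max/(η π_min)⌉ − 1`), both the truncated return time entropy
`J_trunc,η(P)` and the conditional return time entropy `J_cond,η(P)` converge
to the return time entropy `J(P)`, for every `P` in the `ε`-conforming set. -/
theorem truncated_and_conditional_entropy_limits {n : ℕ}
    (Adj : Fin n → Fin n → Prop) (W : Matrix (Fin n) (Fin n) ℕ)
    (pivec : Fin n → ℝ) (ε : ℝ)
    (hconn : ∀ i j, Relation.ReflTransGen Adj i j)
    (hW1 : ∀ i j, Adj i j → 1 ≤ W i j)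
    (hW0 : ∀ i j, ¬ Adj i j → W i j = 0)
    (hpi : ∀ i, 0 < pivec i) (hpisum : ∑ i, pivec i = 1)
    (hε : 0 < ε) (hne : (Conf Adj pivec ε).Nonempty)
    (F : Matrix (Fin n) (Fin n) ℝ → ℤ → Fin n → Fin n → ℝ)
    (hF : ∀ P ∈ Conf Adj pivec ε, IsHittingProb P W (F P))
    (wmax : ℕ) (hwmax : wmax = Finset.univ.sup (fun p : Fin n × Fin n => W p.1 p.2))
    (pimin : ℝ) (hpimin : IsLeast (Set.range pivec) pimin)
    (Nfun : ℝ → ℕ) (hNfun : ∀ η : ℝ, Nfun η = ⌈(wmax : ℝ) / (η * pimin)⌉₊ - 1) :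
    ∀ P ∈ Conf Adj pivec ε,
      Tendsto
        (fun η : ℝ => ∑ i : Fin n, pivec i *
          ∑ k ∈ Finset.Icc 1 (Nfun η), Real.negMulLog (F P (k : ℤ) i i))
        (nhdsWithin 0 (Set.Ioi (0 : ℝ)))
        (nhds (∑ i : Fin n, pivec i *
          ∑' k : ℕ, Real.negMulLog (F P ((k : ℤ) + 1) i i))) ∧
      Tendsto
        (fun η : ℝ => ∑ i : Fin n, pivec i *
          ∑ k ∈ Finset.Icc 1 (Nfun η),
            Real.negMulLog (F P (k : ℤ) i i / ∑ k' ∈ Finset.Icc 1 (Nfun η), F P (k' : ℤ) i i))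
        (nhdsWithin 0 (Set.Ioi (0 : ℝ)))
        (nhds (∑ i : Fin n, pivec i *
          ∑' k : ℕ, Real.negMulLog (F P ((k : ℤ) + 1) i i))) := by
  intro P hP
  have hFP := hF P hP
  obtain ⟨hA, hB, hrow, hst⟩ := hP
  have hP0 : ∀ i j, 0 ≤ P i j := fun i j => by
    by_cases h : Adj i j
    · exact hε.le.trans (hA i j h)
    · rw [hB i j h]
  have hPW : ∀ i j, P i j = 0 ∨ 1 ≤ W i j := fun i j => by
    by_cases h : Adj i j
    · exact Or.inr (hW1 i j h)
    · exact Or.inl (hB i j h)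
  have hN : Tendsto Nfun (nhdsWithin 0 (Set.Ioi (0 : ℝ))) atTop := by
    obtain ⟨⟨i0, hi0⟩, -⟩ := hpimin
    have hpm : 0 < pimin := hi0 ▸ hpi i0
    have hw : 0 < wmax := by
      by_contra hcon
      have hz : ∀ j, P i0 j = 0 := by
        intro j
        rcases hPW i0 j with h | h
        · exact h
        · exfalso
          have := Finset.le_sup (f := fun p : Fin n × Fin n => W p.1 p.2)
            (Finset.mem_univ (i0, j))
          rw [← hwmax] at this
          simp only at this
          omega
      have := hrow i0
      simp [hz] at this
    have h1 : Tendsto (fun η : ℝ => ((wmax : ℝ) / pimin) * η⁻¹)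
        (nhdsWithin 0 (Set.Ioi (0 : ℝ))) atTop :=
      tendsto_inv_nhdsGT_zero.const_mul_atTop (by positivity)
    have h2 : Tendsto (fun η : ℝ => ⌈((wmax : ℝ) / pimin) * η⁻¹⌉₊ - 1)
        (nhdsWithin 0 (Set.Ioi (0 : ℝ))) atTop :=
      (tendsto_sub_atTop_nat 1).comp (tendsto_nat_ceil_atTop.comp h1)
    refine h2.congr fun η => ?_
    rw [hNfun]
    congr 2
    rw [div_mul_eq_div_div, div_right_comm, div_eq_mul_inv _ η]
  have hIcc : ∀ (g : ℤ → ℝ) (N : ℕ), ∑ k ∈ Finset.Icc 1 N, g (k : ℤ)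
      = ∑ k ∈ Finset.range N, g ((k : ℤ) + 1) := by
    intro g N
    induction N with
    | zero => simp
    | succ N ih =>
      rw [Finset.sum_Icc_succ_top (by omega), ih, Finset.sum_range_succ]
      push_cast; rfl
  have hmain := fun i => aux_chain P W pivec hpi hP0 hPW hrow hst (F P) hFP i
  constructor
  · refine tendsto_finsetSum _ fun i _ => Tendsto.const_mul _ ?_
    obtain ⟨h0, h1, h2⟩ := hmain i
    refine ((aux_entropy _ (fun k => h0 _) h1 h2).1.comp hN).congr fun η => ?_
    exact (hIcc (fun k => negMulLog (F P k i i)) _).symm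
  · refine tendsto_finsetSum _ fun i _ => Tendsto.const_mul _ ?_
    obtain ⟨h0, h1, h2⟩ := hmain i
    refine ((aux_entropy _ (fun k => h0 _) h1 h2).2.comp hN).congr fun η => ?_
    rw [hIcc (fun k => F P k i i)]
    exact (hIcc (fun k => negMulLog (F P k i i /
      ∑ k' ∈ Finset.range (Nfun η), F P ((k' : ℤ) + 1) i i)) _).symm
end

section
/- Let P ∈ ℝ^{n×n} be a nonnegative, row-stochastic, irreducible matrix with stationary distribution π > 0, defined over a strongly connected weighted graph with travel times w_{ij} ∈ ℤ_{>0} on edges (w_{ij} = 0 and p_{ij} = 0 off edges), and let F_k(i,i) be the first return probabilities defined by the recursion F_k(i,j) = p_{ij}·1{k = w_{ij}} + Σ_{h≠j} p_{ih} F_{k−w_{ih}}(h,j) for k ≥ 1, F_k = 0 for k ≤ 0. Then the expected first return time of every state i satisfies 𝔼[T_{ii}] = Σ_{k=1}^∞ k·F_k(i,i) = π^T (P ∘ W) 𝟙_n / π_i, where ∘ denotes the Hadamard (entrywise) product; in particular, for unitary travel times 𝔼[T_{ii}] = 1/π_i. -/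
open scoped BigOperators

theorem aux_pi {n : ℕ} (P : Matrix (Fin n) (Fin n) ℝ) (pv x : Fin n → ℝ)
    (hstat : ∀ j, ∑ i, pv i * P i j = pv j) (j : Fin n) :
    ∑ i, pv i * (∑ h, if h = j then 0 else P i h * x h) = (∑ i, pv i * x i) - pv j * x j := by
  have h1 : ∀ i, pv i * (∑ h, if h = j then 0 else P i h * x h)
      = ∑ h, if h = j then 0 else pv i * P i h * x h := by
    intro i
    rw [Finset.mul_sum]
    refine Finset.sum_congr rfl fun h _ => ?_
    split_ifs <;> ring
  simp_rw [h1]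
  rw [Finset.sum_comm]
  have h2 : ∀ h, (∑ i, if h = j then 0 else pv i * P i h * x h)
      = pv h * x h - if h = j then pv h * x h else 0 := by
    intro h
    split_ifs with hh
    · simp
    · rw [← Finset.sum_mul, hstat]; ring
  simp_rw [h2]
  rw [Finset.sum_sub_distrib]
  simp

theorem aux_le (φ : ℤ → ℝ) (hnn : ∀ k, 0 ≤ φ k) (h0 : ∀ k, k ≤ 0 → φ k = 0)
    (N : ℤ) (s : Finset ℤ) (hs : ∀ k ∈ s, k ≤ N) :
    ∑ k ∈ s, φ k ≤ ∑ k ∈ Finset.Icc 1 N, φ k := by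
  rw [← Finset.sum_filter_ne_zero]
  apply Finset.sum_le_sum_of_subset_of_nonneg
  · intro k hk
    rw [Finset.mem_filter] at hk
    rw [Finset.mem_Icc]
    refine ⟨?_, hs k hk.1⟩
    by_contra hc
    exact hk.2 (h0 k (by omega))
  · intro k _ _
    exact hnn k

theorem aux_shift_s19 (φ : ℤ → ℝ) (hnn : ∀ k, 0 ≤ φ k) (h0 : ∀ k, k ≤ 0 → φ k = 0)
    (N M w : ℤ) (hM : N - w ≤ M) :
    ∑ k ∈ Finset.Icc 1 N, φ (k - w) ≤ ∑ k ∈ Finset.Icc 1 M, φ k := by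
  have : ∑ k ∈ Finset.Icc 1 N, φ (k - w)
      = ∑ k ∈ (Finset.Icc 1 N).map (Equiv.subRight w).toEmbedding, φ k := by
    simp
  rw [this]
  apply aux_le φ hnn h0
  intro k hk
  simp only [Finset.mem_map, Finset.mem_Icc] at hk
  obtain ⟨a, ha, rfl⟩ := hk
  simp
  omega

theorem aux_summable (φ : ℤ → ℝ) (hnn : ∀ k, 0 ≤ φ k) (h0 : ∀ k, k ≤ 0 → φ k = 0)
    (C : ℝ) (hC : ∀ N : ℕ, ∑ k ∈ Finset.Icc 1 (N : ℤ), φ k ≤ C) :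
    Summable φ ∧ ∑' k, φ k ≤ C := by
  have key : ∀ s : Finset ℤ, ∑ k ∈ s, φ k ≤ C := by
    intro s
    obtain ⟨N, hN⟩ : ∃ N : ℕ, ∀ k ∈ s, k ≤ (N : ℤ) := by
      refine ⟨s.sup Int.toNat, fun k hk => ?_⟩
      have := Finset.le_sup (f := Int.toNat) hk
      omega
    exact (aux_le φ hnn h0 N s hN).trans (hC N)
  exact ⟨summable_of_sum_le hnn key, Real.tsum_le_of_sum_le hnn key⟩

theorem aux_main {n : ℕ}
    (P : Matrix (Fin n) (Fin n) ℝ) (W : Matrix (Fin n) (Fin n) ℕ)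
    (pv : Fin n → ℝ)
    (hnonneg : ∀ i j, 0 ≤ P i j)
    (hrow : ∀ i, ∑ j, P i j = 1)
    (hirr : ∀ i j, ∃ m : ℕ, 0 < m ∧ 0 < (P ^ m) i j)
    (hW1 : ∀ i j, 0 < P i j → 1 ≤ W i j)
    (hW0 : ∀ i j, ¬ 0 < P i j → W i j = 0 ∧ P i j = 0)
    (hpi : ∀ i, 0 < pv i)
    (hstat : ∀ j, ∑ i, pv i * P i j = pv j)
    (j : Fin n) (f : ℤ → Fin n → ℝ)
    (h0 : ∀ k : ℤ, k ≤ 0 → ∀ i, f k i = 0)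
    (hrec' : ∀ k : ℤ, 1 ≤ k → ∀ i,
      f k i = (if k = (W i j : ℤ) then P i j else 0) +
        ∑ h : Fin n, if h = j then 0 else P i h * f (k - (W i h : ℤ)) h) :
    HasSum (fun k : ℤ => (k : ℝ) * f k j)
      ((∑ a : Fin n, pv a * ∑ b : Fin n, P a b * (W a b : ℝ)) / pv j) := by
  -- recursion for all integers
  have hrec : ∀ k : ℤ, ∀ i,
      f k i = (if k = (W i j : ℤ) then P i j else 0) +
        ∑ h : Fin n, if h = j then 0 else P i h * f (k - (W i h : ℤ)) h := by
    intro k i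
    rcases le_or_gt 1 k with hk | hk
    · exact hrec' k hk i
    · rw [h0 k (by omega)]
      have e1 : (if k = (W i j : ℤ) then P i j else 0) = 0 := by
        split_ifs with hh
        · by_contra hc
          have := hW1 i j (lt_of_le_of_ne (hnonneg i j) (Ne.symm hc))
          omega
        · rfl
      rw [e1, Finset.sum_eq_zero]
      · simp
      · intro h _
        rw [h0 _ (by omega)]; simp
  have hnnN : ∀ N : ℕ, ∀ k : ℤ, k ≤ N → ∀ i, 0 ≤ f k i := by
    intro N
    induction N with
    | zero => intro k hk i; rw [h0 k (by exact_mod_cast hk)]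
    | succ N ih =>
      intro k hk i
      rw [hrec]
      apply add_nonneg
      · split_ifs
        · exact hnonneg _ _
        · exact le_rfl
      · apply Finset.sum_nonneg
        intro h _
        split_ifs
        · exact le_rfl
        · by_cases hp : 0 < P i h
          · have := hW1 i h hp
            exact mul_nonneg (hnonneg _ _) (ih _ (by push_cast at hk; omega) _)
          · rw [(hW0 i h hp).2]; simp
  have hnn : ∀ i k, 0 ≤ f k i := fun i k => hnnN k.toNat k (by omega) i
  -- lower comparison
  have hlow : ∀ i h, h ≠ j → ∀ k : ℤ, P i h * f k h ≤ f (k + W i h) i := by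
    intro i h hh k
    rw [hrec (k + W i h) i]
    have h1 : P i h * f k h ≤ ∑ h' : Fin n, if h' = j then 0 else
        P i h' * f (k + (W i h : ℤ) - (W i h' : ℤ)) h' := by
      have := Finset.single_le_sum (f := fun h' : Fin n => if h' = j then 0 else
        P i h' * f (k + (W i h : ℤ) - (W i h' : ℤ)) h') (s := Finset.univ)
        (fun a _ => by
          split_ifs
          · exact le_rfl
          · exact mul_nonneg (hnonneg _ _) (hnn _ _)) (Finset.mem_univ h)
      simpa [hh] using this
    have h2 : 0 ≤ (if k + (W i h : ℤ) = (W i j : ℤ) then P i j else 0) := by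
      split_ifs
      · exact hnonneg _ _
      · exact le_rfl
    linarith
  have hsplit : ∀ _i : Fin n, ∀ x y : Fin n → ℝ, x j = y j → (∀ h, h ≠ j → x h ≤ y h) →
      x j + ∑ h, (if h = j then 0 else x h) ≤ ∑ h, y h := by
    intro i x y hj hh
    have : x j = ∑ h, if h = j then x h else 0 := by simp
    rw [this, ← Finset.sum_add_distrib]
    apply Finset.sum_le_sum
    intro h _
    split_ifs with h'
    · subst h'; simp [hj]
    · simpa using hh h h'
  have hone : ∀ (N : ℤ) (w : ℕ) (c : ℝ), 0 ≤ c →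
      ∑ k ∈ Finset.Icc 1 N, (if k = (w : ℤ) then c else 0) ≤ c := by
    intro N w c hc
    rw [Finset.sum_ite_eq']
    split_ifs
    · exact le_rfl
    · exact hc
  -- partial sums bounded by one
  have hS : ∀ N : ℕ, ∀ i, ∑ k ∈ Finset.Icc 1 (N : ℤ), f k i ≤ 1 := by
    intro N
    induction N with
    | zero => intro i; simp
    | succ N ih =>
      intro i
      have e : ∑ k ∈ Finset.Icc 1 ((N + 1 : ℕ) : ℤ), f k i =
          ∑ k ∈ Finset.Icc 1 ((N + 1 : ℕ) : ℤ), (if k = (W i j : ℤ) then P i j else 0) +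
          ∑ h : Fin n, if h = j then 0 else
            P i h * ∑ k ∈ Finset.Icc 1 ((N + 1 : ℕ) : ℤ), f (k - (W i h : ℤ)) h := by
        rw [Finset.sum_congr rfl (fun k _ => hrec k i), Finset.sum_add_distrib, Finset.sum_comm]
        congr 1
        refine Finset.sum_congr rfl fun h _ => ?_
        split_ifs
        · simp
        · rw [Finset.mul_sum]
      rw [e]
      have hb := hone ((N + 1 : ℕ) : ℤ) (W i j) (P i j) (hnonneg i j)
      have hc := hsplit i (fun h => if h = j then P i j else
            P i h * ∑ k ∈ Finset.Icc 1 ((N + 1 : ℕ) : ℤ), f (k - (W i h : ℤ)) h)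
          (fun h => P i h) (by simp) (by
            intro h hh
            simp only [hh, if_false]
            by_cases hp : 0 < P i h
            · have hw := hW1 i h hp
              have := (aux_shift_s19 (fun k => f k h) (hnn h) (fun k hk => h0 k hk h)
                ((N + 1 : ℕ) : ℤ) N (W i h) (by push_cast; omega)).trans (ih h)
              exact mul_le_of_le_one_right (hnonneg _ _) this
            · rw [(hW0 i h hp).2]; simp)
      rw [hrow] at hc
      have hd : ∑ h, (if h = j then 0 else (if h = j then P i j else
            P i h * ∑ k ∈ Finset.Icc 1 ((N + 1 : ℕ) : ℤ), f (k - (W i h : ℤ)) h)) =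
          ∑ h : Fin n, if h = j then 0 else
            P i h * ∑ k ∈ Finset.Icc 1 ((N + 1 : ℕ) : ℤ), f (k - (W i h : ℤ)) h := by
        refine Finset.sum_congr rfl fun h _ => ?_
        split_ifs <;> rfl
      simp only [if_true] at hc
      rw [hd] at hc
      linarith
  have hsum : ∀ i, Summable (fun k => f k i) ∧ ∑' k, f k i ≤ 1 := fun i =>
    aux_summable (fun k => f k i) (hnn i) (fun k hk => h0 k hk i) 1 (fun N => hS N i)
  set S : Fin n → ℝ := fun i => ∑' k, f k i with hSdef
  have hSs : ∀ i, HasSum (fun k => f k i) (S i) := fun i => (hsum i).1.hasSum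
  have hS1 : ∀ i, S i ≤ 1 := fun i => (hsum i).2
  have hSshift : ∀ h (w : ℤ), HasSum (fun k => f (k - w) h) (S h) := fun h w =>
    (Equiv.subRight w).hasSum_iff.mpr (hSs h)
  have hSrec : ∀ i, S i = P i j + ∑ h, if h = j then 0 else P i h * S h := by
    intro i
    have := (hasSum_ite_eq (W i j : ℤ) (P i j)).add
      (hasSum_sum (s := Finset.univ) (f := fun (h : Fin n) (k : ℤ) =>
        if h = j then 0 else P i h * f (k - (W i h : ℤ)) h)
        (a := fun h => if h = j then 0 else P i h * S h) (fun h _ => by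
          split_ifs
          · exact hasSum_zero
          · exact (hSshift h _).mul_left _))
    refine (hSs i).unique ?_
    convert this using 1
    funext k
    exact hrec k i
  have hfull : ∀ i (x : Fin n → ℝ), ∑ h, P i h * x h =
      P i j * x j + ∑ h, if h = j then 0 else P i h * x h := by
    intro i x
    have : P i j * x j = ∑ h, if h = j then P i h * x h else 0 := by simp
    rw [this, ← Finset.sum_add_distrib]
    refine Finset.sum_congr rfl fun h _ => ?_
    split_ifs <;> simp
  -- S = 1
  have hd : ∀ i, 1 - S i = ∑ h, if h = j then 0 else P i h * (1 - S h) := by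
    intro i
    have h1 := hfull i (fun _ => 1)
    simp only [mul_one, hrow] at h1
    have h2 : ∑ h, (if h = j then 0 else P i h * (1 - S h)) =
        ∑ h, (if h = j then 0 else P i h) - ∑ h, (if h = j then 0 else P i h * S h) := by
      rw [← Finset.sum_sub_distrib]
      refine Finset.sum_congr rfl fun h _ => ?_
      split_ifs <;> ring
    rw [h2, hSrec i]
    linarith
  have hdj : 1 - S j = 0 := by
    have h1 := aux_pi P pv (fun h => 1 - S h) hstat j
    rw [Finset.sum_congr rfl (fun i _ => by rw [← hd i])] at h1
    have h2 : pv j * (1 - S j) = 0 := by linarith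
    exact (mul_eq_zero.mp h2).resolve_left (hpi j).ne'
  have hdP : ∀ i, 1 - S i = ∑ h, P i h * (1 - S h) := by
    intro i
    rw [hfull i (fun h => 1 - S h), hdj, ← hd i]; ring
  have hPnn : ∀ m : ℕ, ∀ a b, 0 ≤ (P ^ m) a b := by
    intro m
    induction m with
    | zero => intro a b; rw [pow_zero, Matrix.one_apply]; split_ifs <;> norm_num
    | succ m ih =>
      intro a b
      rw [pow_succ, Matrix.mul_apply]
      exact Finset.sum_nonneg fun c _ => mul_nonneg (ih _ _) (hnonneg _ _)
  -- propagation along edges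
  have hprop : ∀ Q : Fin n → Prop, Q j → (∀ i h, Q i → 0 < P i h → Q h) → ∀ i, Q i := by
    intro Q hQj hQ
    have : ∀ m : ℕ, ∀ i, 0 < (P ^ m) j i → Q i := by
      intro m
      induction m with
      | zero =>
        intro i hi
        rw [pow_zero, Matrix.one_apply] at hi
        split_ifs at hi with hji
        · exact hji ▸ hQj
        · exact absurd hi (lt_irrefl _)
      | succ m ih =>
        intro i hi
        rw [pow_succ, Matrix.mul_apply] at hi
        by_contra hc
        refine absurd hi (not_lt.mpr (le_of_eq (Finset.sum_eq_zero fun c _ => ?_)))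
        by_contra hne
        have hne' := mul_ne_zero_iff.mp hne
        exact hc (hQ c i (ih c (lt_of_le_of_ne (hPnn m j c) hne'.1.symm))
          (lt_of_le_of_ne (hnonneg c i) hne'.2.symm))
    intro i
    obtain ⟨m, -, hm⟩ := hirr j i
    exact this m i hm
  have hSone : ∀ i, S i = 1 := by
    have : ∀ i, 1 - S i = 0 := by
      refine hprop _ hdj ?_
      intro i h hi hp
      have h1 := hdP i
      rw [hi] at h1
      have h2 := (Finset.sum_eq_zero_iff_of_nonneg (fun h _ =>
        mul_nonneg (hnonneg i h) (sub_nonneg.mpr (hS1 h)))).mp h1.symm h (Finset.mem_univ h)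
      exact (mul_eq_zero.mp h2).resolve_left hp.ne'
    intro i
    linarith [this i]
  -- first moments
  have hgnn : ∀ i (k : ℤ), 0 ≤ (k : ℝ) * f k i := by
    intro i k
    rcases le_or_gt k 0 with hk | hk
    · rw [h0 k hk]; simp
    · exact mul_nonneg (by exact_mod_cast hk.le) (hnn i k)
  have hg0 : ∀ i (k : ℤ), k ≤ 0 → (k : ℝ) * f k i = 0 := by
    intro i k hk
    rw [h0 k hk]; simp
  have hgrec : ∀ (k : ℤ) i, (k : ℝ) * f k i = (if k = (W i j : ℤ) then P i j * W i j else 0) +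
      ∑ h, if h = j then 0 else P i h * (((k - (W i h : ℤ) : ℤ) : ℝ) * f (k - (W i h : ℤ)) h
        + W i h * f (k - (W i h : ℤ)) h) := by
    intro k i
    rw [hrec k i, mul_add, Finset.mul_sum]
    congr 1
    · split_ifs with hk
      · rw [hk]; push_cast; ring
      · simp
    · refine Finset.sum_congr rfl fun h _ => ?_
      split_ifs
      · simp
      · push_cast; ring
  set c : Fin n → ℝ := fun i => ∑ b, P i b * (W i b : ℝ) with hc
  have hMle : ∀ (N : ℕ) i, ∑ k ∈ Finset.Icc 1 (N : ℤ), (k : ℝ) * f k i ≤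
      c i + ∑ h, if h = j then 0 else
        P i h * ∑ k ∈ Finset.Icc 1 (N : ℤ), (k : ℝ) * f k h := by
    intro N i
    rw [Finset.sum_congr rfl (fun k _ => hgrec k i), Finset.sum_add_distrib, Finset.sum_comm, hc]
    dsimp only
    rw [hfull i (fun b => (W i b : ℝ)), add_assoc, ← Finset.sum_add_distrib]
    apply add_le_add (hone _ _ _ (mul_nonneg (hnonneg _ _) (Nat.cast_nonneg _)))
    apply Finset.sum_le_sum
    intro h _
    split_ifs
    · simp
    · rw [← Finset.mul_sum, ← mul_add]
      apply mul_le_mul_of_nonneg_left _ (hnonneg i h)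
      rw [Finset.sum_add_distrib, add_comm, ← Finset.mul_sum]
      apply add_le_add
      · refine mul_le_of_le_one_right (Nat.cast_nonneg _) ?_
        exact (aux_shift_s19 (fun k => f k h) (hnn h) (fun k hk => h0 k hk h)
                N N (W i h) (by omega)).trans (hS N h)
      · exact aux_shift_s19 (fun k => (k : ℝ) * f k h) (hgnn h) (hg0 h) N N (W i h) (by omega)
  have hMj : Summable (fun k : ℤ => (k : ℝ) * f k j) := by
    refine (aux_summable _ (hgnn j) (hg0 j) ((∑ a, pv a * c a) / pv j) ?_).1
    intro N
    rw [le_div_iff₀ (hpi j)]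
    have h1 : ∑ i, pv i * ∑ k ∈ Finset.Icc 1 (N : ℤ), (k : ℝ) * f k i ≤
        ∑ i, pv i * (c i + ∑ h, if h = j then 0 else
        P i h * ∑ k ∈ Finset.Icc 1 (N : ℤ), (k : ℝ) * f k h) :=
      Finset.sum_le_sum fun i _ => mul_le_mul_of_nonneg_left (hMle N i) (hpi i).le
    simp_rw [mul_add] at h1
    rw [Finset.sum_add_distrib, aux_pi P pv
      (fun h => ∑ k ∈ Finset.Icc 1 (N : ℤ), (k : ℝ) * f k h) hstat j] at h1
    linarith
  have hMs : ∀ i, Summable (fun k : ℤ => (k : ℝ) * f k i) := by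
    refine hprop _ hMj ?_
    intro i h hi hp
    by_cases hh : h = j
    · rw [hh]; exact hMj
    have h1 : Summable (fun k : ℤ => (P i h)⁻¹ *
        (((k + (W i h : ℤ) : ℤ) : ℝ) * f (k + (W i h : ℤ)) i)) :=
      ((Equiv.addRight (W i h : ℤ)).summable_iff.mpr hi).mul_left _
    refine Summable.of_nonneg_of_le (hgnn h) ?_ h1
    intro k
    rw [le_inv_mul_iff₀ hp]
    rcases le_or_gt k 0 with hk | hk
    · rw [hg0 h k hk, mul_zero]; exact hgnn _ _
    · have hk' : (0 : ℝ) ≤ k := by exact_mod_cast hk.le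
      calc P i h * (k * f k h) = k * (P i h * f k h) := by ring
        _ ≤ k * f (k + (W i h : ℤ)) i := mul_le_mul_of_nonneg_left (hlow i h hh k) hk'
        _ ≤ _ := by
          apply mul_le_mul_of_nonneg_right _ (hnn _ _)
          push_cast
          have : (0 : ℝ) ≤ (W i h : ℝ) := Nat.cast_nonneg _
          linarith
  set M : Fin n → ℝ := fun i => ∑' k : ℤ, (k : ℝ) * f k i with hMdef
  have hMS : ∀ i, HasSum (fun k : ℤ => (k : ℝ) * f k i) (M i) := fun i => (hMs i).hasSum
  have hMshift : ∀ h (w : ℤ), HasSum (fun k : ℤ => ((k - w : ℤ) : ℝ) * f (k - w) h) (M h) :=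
    fun h w => (Equiv.subRight w).hasSum_iff.mpr (hMS h)
  have hMrec : ∀ i, M i = c i + ∑ h, if h = j then 0 else P i h * M h := by
    intro i
    have := (hasSum_ite_eq (W i j : ℤ) (P i j * (W i j : ℝ))).add
      (hasSum_sum (s := Finset.univ) (f := fun (h : Fin n) (k : ℤ) =>
        if h = j then 0 else P i h * (((k - (W i h : ℤ) : ℤ) : ℝ) * f (k - (W i h : ℤ)) h
          + W i h * f (k - (W i h : ℤ)) h))
        (a := fun h => if h = j then 0 else P i h * (M h + W i h * S h)) (fun h _ => by
          split_ifs
          · exact hasSum_zero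
          · exact ((hMshift h _).add ((hSshift h _).mul_left _)).mul_left _))
    have h2 := (hMS i).unique (by
      convert this using 1
      funext k
      exact hgrec k i)
    rw [h2, hc]
    dsimp only
    rw [hfull i (fun b => (W i b : ℝ)), add_assoc, ← Finset.sum_add_distrib]
    congr 1
    refine Finset.sum_congr rfl fun h _ => ?_
    rw [hSone]
    split_ifs
    · simp
    · ring
  have hfin : M j = (∑ a, pv a * c a) / pv j := by
    rw [eq_div_iff (hpi j).ne']
    have h1 := Finset.sum_congr (rfl : (Finset.univ : Finset (Fin n)) = Finset.univ)
      (fun i _ => congrArg (fun t => pv i * t) (hMrec i))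
    simp_rw [mul_add] at h1
    rw [Finset.sum_add_distrib, aux_pi P pv M hstat j] at h1
    linarith
  rw [← hfin]
  exact hMS j

/-- for an irreducible stochastic `P` with stationary
distribution `π > 0` over a strongly connected weighted graph with positive
integer travel times on edges, the expected first return time of every state
`i` is `𝔼[T_ii] = Σ_{k≥1} k·F_k(i,i) = πᵀ(P ∘ W)𝟙 / π_i`; in particular, for
unitary travel times `𝔼[T_ii] = 1/π_i`. -/
theorem expected_return_time {n : ℕ}
    (P : Matrix (Fin n) (Fin n) ℝ) (W : Matrix (Fin n) (Fin n) ℕ)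
    (pivec : Fin n → ℝ)
    (hnonneg : ∀ i j, 0 ≤ P i j)
    (hrow : ∀ i, ∑ j, P i j = 1)
    (hirr : ∀ i j, ∃ m : ℕ, 0 < m ∧ 0 < (P ^ m) i j)
    (hW1 : ∀ i j, 0 < P i j → 1 ≤ W i j)
    (hW0 : ∀ i j, ¬ 0 < P i j → W i j = 0 ∧ P i j = 0)
    (hpi : ∀ i, 0 < pivec i) (hpisum : ∑ i, pivec i = 1)
    (hstat : ∀ j, ∑ i, pivec i * P i j = pivec j)
    (F : ℤ → Fin n → Fin n → ℝ) (hF : IsHittingProb P W F) :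
    (∀ i : Fin n,
      HasSum (fun k : ℕ => (k : ℝ) * F (k : ℤ) i i)
        ((∑ a : Fin n, pivec a * ∑ b : Fin n, P a b * (W a b : ℝ)) / pivec i)) ∧
    ((∀ i j, 0 < P i j → W i j = 1) →
      ∀ i : Fin n, HasSum (fun k : ℕ => (k : ℝ) * F (k : ℤ) i i) (1 / pivec i)) := by
  have key : ∀ i : Fin n,
      HasSum (fun k : ℕ => (k : ℝ) * F (k : ℤ) i i)
        ((∑ a : Fin n, pivec a * ∑ b : Fin n, P a b * (W a b : ℝ)) / pivec i) := by
    intro i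
    have h := aux_main P W pivec hnonneg hrow hirr hW1 hW0 hpi hstat i (fun k a => F k a i)
      (fun k hk a => hF.1 k hk a i) (fun k hk a => hF.2 k hk a i)
    have h2 := (Function.Injective.hasSum_iff (f := fun k : ℤ => (k : ℝ) * F k i i)
      (g := ((↑) : ℕ → ℤ)) Nat.cast_injective (by
        intro k hk
        have : k ≤ 0 := by
          by_contra hc
          exact hk ⟨k.toNat, by omega⟩
        rw [hF.1 k this]; simp)).mpr h
    simpa [Function.comp_def] using h2
  refine ⟨key, fun hu i => ?_⟩
  have h1 : ∀ a, ∑ b, P a b * (W a b : ℝ) = 1 := by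
    intro a
    rw [← hrow a]
    refine Finset.sum_congr rfl fun b _ => ?_
    by_cases hp : 0 < P a b
    · rw [hu a b hp]; simp
    · rw [(hW0 a b hp).2]; simp
  have := key i
  simp_rw [h1, mul_one, hpisum] at this
  exact this
end
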